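/- arXiv:2501.19028 — 2 statements merged into one kernel-verified Lean document; each statement's English description precedes it below -/
import Mathlib

section
/- Epi-convergence of expectation functions under varying measures and integrands (Feinberg–Kasyanov–Liang): Let 𝒳 ⊆ ℝⁿ and Ξ ⊆ ℝᵐ be closed, let 𝐏, 𝐏_ν (ν ∈ ℕ) be Borel probability measures on Ξ with 𝐏_ν converging weakly to 𝐏, and let f, f_ν : 𝒳 × Ξ → ℝ̄ be such that for each x̄ ∈ 𝒳: (i) f(x̄,·) and each f_ν(x̄,·) are Borel measurable; (ii) liminf_{α→−∞} liminf_{(ν,x)→(∞,x̄)} ∫_Ξ f_ν(x,ξ) 1{f_ν(x,ξ) ≤ α} d𝐏_ν(ξ) = 0, and for 𝐏-almost every ξ̄ ∈ Ξ, liminf_{(ν,x,ξ)→(∞,x̄,ξ̄)} f_ν(x,ξ) ≥ f(x̄,ξ̄); (iii) there exists a sequence x_ν ∈ 𝒳 with x_ν → x̄ such that limsup_{α→∞} limsup_{ν→∞} ∫_Ξ f_ν(x_ν,ξ) 1{f_ν(x_ν,ξ) ≥ α} d𝐏_ν(ξ) = 0, and for 𝐏-almost every ξ̄ ∈ Ξ,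 limsup_{(ν,ξ)→(∞,ξ̄)} f_ν(x_ν,ξ) ≤ f(x̄,ξ̄). Then the expectation functions x ↦ ∫_Ξ f_ν(x,ξ) d𝐏_ν(ξ) epi-converge to x ↦ ∫_Ξ f(x,ξ) d𝐏(ξ) on 𝒳. -/
/-!
The key fact is Fatou's lemma for weakly converging measures, `lintegral_le_liminf_of_weakConv`:
if `g ξ ≤ liminf h ν ξ'` as `(ν, ξ') → (∞, ξ)` for almost every `ξ`, with nonnegative integrands,
then `∫ g ∂P ≤ liminf ∫ h ν ∂(Pν ν)`. It is proved level by level: up to a null set, `{g > c}` is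
covered by the increasing open sets `interior {ξ | ∀ ν ≥ N, h ν ξ > c}`, so the portmanteau
inequality for open sets gives `P {g > c} ≤ liminf (Pν ν) {h ν > c}`, and the layer-cake formula
with the ordinary Fatou lemma in `c` concludes.

For signed integrands `G ν` whose negative tails are uniformly small, this is applied to the
positive part of `G ν + a`. The pointwise comparison
`(G + a)⁺ + G⁻ ≤ G⁺ + a + (G · 1{G ≤ -a})⁻` shows that the error made is at most the tail, which
gives the lower half of epi-convergence (`eintegral_le_liminf`). The upper half is the same result
for `-f` and `-fν`. Since `eintegral` assigns `⊥` to `⊤ - ⊤`, passing to negatives requires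
`∫ f⁺ ∂P < ∞`, which follows from the Fatou lemma and the upper-tail hypothesis.
-/

open Filter MeasureTheory Topology Set

noncomputable section

/-- Extended-real to extended-nonnegative-real (positive part). -/
def erealToENN (x : EReal) : ENNReal := if x = ⊤ then ⊤ else ENNReal.ofReal x.toReal

/-- Integral of an extended-real-valued function. -/
def eintegral {Ω : Type*} [MeasurableSpace Ω] (P : Measure Ω) (g : Ω → EReal) : EReal :=
  ((∫⁻ ω, erealToENN (g ω) ∂P : ENNReal) : EReal) -
    ((∫⁻ ω, erealToENN (-(g ω)) ∂P : ENNReal) : EReal)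

/-- g·1{g ≤ α}. -/
def truncBelow {Ω : Type*} (g : Ω → EReal) (α : ℝ) (ω : Ω) : EReal :=
  if g ω ≤ (α : EReal) then g ω else 0

/-- g·1{g ≥ α}. -/
def truncAbove {Ω : Type*} (g : Ω → EReal) (α : ℝ) (ω : Ω) : EReal :=
  if (α : EReal) ≤ g ω then g ω else 0

/-- Epi-convergence of a sequence of extended-real-valued functions on a set `Z`. -/
def EpiConvergesOn {E : Type*} [TopologicalSpace E] (Z : Set E)
    (F : ℕ → E → EReal) (f : E → EReal) : Prop :=
  ∀ z ∈ Z,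
    (∀ zs : ℕ → E, (∀ ν, zs ν ∈ Z) → Tendsto zs atTop (𝓝 z) →
      f z ≤ liminf (fun ν => F ν (zs ν)) atTop) ∧
    (∃ zs : ℕ → E, (∀ ν, zs ν ∈ Z) ∧ Tendsto zs atTop (𝓝 z) ∧
      limsup (fun ν => F ν (zs ν)) atTop ≤ f z)

/-- Iterated lower limit as `(ν, x) → (∞, x̄)` with `x` ranging over `X`. -/
def liminfNuX {E : Type*} [PseudoMetricSpace E] (X : Set E) (xb : E)
    (h : ℕ → E → EReal) : EReal :=
  ⨆ (δ : ℝ) (_ : 0 < δ) (ν' : ℕ),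
    ⨅ (ν : ℕ) (_ : ν' ≤ ν) (x : E) (_ : x ∈ X) (_ : dist x xb ≤ δ), h ν x

/-- Iterated lower limit as `(ν, x, ξ) → (∞, x̄, ξ̄)`. -/
def liminfNuXXi {E Ξ' : Type*} [PseudoMetricSpace E] [PseudoMetricSpace Ξ'] (X : Set E)
    (xb : E) (ξb : Ξ') (h : ℕ → E → Ξ' → EReal) : EReal :=
  ⨆ (δ : ℝ) (_ : 0 < δ) (ν' : ℕ),
    ⨅ (ν : ℕ) (_ : ν' ≤ ν) (x : E) (_ : x ∈ X) (_ : dist x xb ≤ δ)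
      (ξ : Ξ') (_ : dist ξ ξb ≤ δ), h ν x ξ

/-- Iterated upper limit as `(ν, ξ) → (∞, ξ̄)`. -/
def limsupNuXi {Ξ' : Type*} [PseudoMetricSpace Ξ'] (ξb : Ξ') (h : ℕ → Ξ' → EReal) : EReal :=
  ⨅ (δ : ℝ) (_ : 0 < δ) (ν' : ℕ),
    ⨆ (ν : ℕ) (_ : ν' ≤ ν) (ξ : Ξ') (_ : dist ξ ξb ≤ δ), h ν ξ

/-- Upper limit as `ν → ∞`. -/
def limsupNu (h : ℕ → EReal) : EReal := ⨅ (ν' : ℕ), ⨆ (ν : ℕ) (_ : ν' ≤ ν), h ν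

/-- Lower limit as `α → −∞`. -/
def liminfAlphaBot (G : ℝ → EReal) : EReal := ⨆ (αb : ℝ), ⨅ (α : ℝ) (_ : α ≤ αb), G α

/-- Upper limit as `α → ∞`. -/
def limsupAlphaTop (G : ℝ → EReal) : EReal := ⨅ (αb : ℝ), ⨆ (α : ℝ) (_ : αb ≤ α), G α

/-- Weak convergence of measures: integrals of bounded continuous functions converge. -/
def WeakConv {Ω : Type*} [TopologicalSpace Ω] [MeasurableSpace Ω]
    (Pν : ℕ → Measure Ω) (P : Measure Ω) : Prop :=
  ∀ h : Ω → ℝ, Continuous h → (∃ C : ℝ, ∀ ω, |h ω| ≤ C) →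
    Tendsto (fun ν => ∫ ω, h ω ∂(Pν ν)) atTop (𝓝 (∫ ω, h ω ∂P))

/-! ### Fatou's lemma for weakly converging measures -/

/-- Portmanteau for open sets, from the definition `WeakConv`. -/
lemma WeakConv.le_liminf_isOpen {Ω : Type*} [PseudoMetricSpace Ω] [MeasurableSpace Ω]
    [BorelSpace Ω] {P : Measure Ω} {Pν : ℕ → Measure Ω} [IsProbabilityMeasure P]
    [∀ ν, IsProbabilityMeasure (Pν ν)] (hweak : WeakConv Pν P) {U : Set Ω} (hU : IsOpen U) :
    P U ≤ liminf (fun ν => Pν ν U) atTop := by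
  let Q : ProbabilityMeasure Ω := ⟨P, inferInstance⟩
  let Qν : ℕ → ProbabilityMeasure Ω := fun ν => ⟨Pν ν, inferInstance⟩
  have h : Tendsto Qν atTop (𝓝 Q) := by
    rw [ProbabilityMeasure.tendsto_iff_forall_integral_tendsto]
    intro h
    exact hweak h h.continuous ⟨‖h‖, fun ω => h.norm_coe_le_norm ω⟩
  exact ProbabilityMeasure.le_liminf_measure_open_of_tendsto h hU

/-- The layer-cake formula for functions that may take the value `⊤`. -/
lemma lintegral_eq_lintegral_meas_ofReal_lt {Ω : Type*} [MeasurableSpace Ω] (μ : Measure Ω)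
    {g : Ω → ENNReal} (hg : Measurable g) :
    ∫⁻ ω, g ω ∂μ = ∫⁻ t in Ioi (0 : ℝ), μ {ω | ENNReal.ofReal t < g ω} := by
  by_cases htop : μ {ω | g ω = ⊤} = 0
  · have hfin : ∀ᵐ ω ∂μ, g ω ≠ ⊤ := by simpa [ae_iff] using htop
    calc ∫⁻ ω, g ω ∂μ = ∫⁻ ω, ENNReal.ofReal (g ω).toReal ∂μ :=
          lintegral_congr_ae (hfin.mono fun ω h => (ENNReal.ofReal_toReal h).symm)
      _ = ∫⁻ t in Ioi (0 : ℝ), μ {ω | t < (g ω).toReal} :=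
          lintegral_eq_lintegral_meas_lt μ (Eventually.of_forall fun _ => ENNReal.toReal_nonneg)
            hg.ennreal_toReal.aemeasurable
      _ = _ := by
          refine setLIntegral_congr_fun measurableSet_Ioi fun t ht => measure_congr ?_
          filter_upwards [hfin] with ω h
          exact propext (ENNReal.ofReal_lt_iff_lt_toReal (le_of_lt ht) h).symm
  · have h1 : ∫⁻ ω, g ω ∂μ = ⊤ := by
      by_contra h
      refine htop ?_
      simpa [ae_iff] using ae_lt_top hg h
    rw [h1, eq_comm, eq_top_iff]
    calc (⊤ : ENNReal) = ∫⁻ _ in Ioi (0 : ℝ), μ {ω | g ω = ⊤} := by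
          simp [ENNReal.mul_top htop]
      _ ≤ _ := lintegral_mono fun t => measure_mono fun ω (h : g ω = ⊤) => by
          simp [h]

/-- Fatou's lemma for weakly converging measures: if `g ξ` is a.e. at most the joint lower limit
of `h ν ξ'` as `(ν, ξ') → (∞, ξ)`, then `∫ g ∂P ≤ liminf ∫ h ν ∂(Pν ν)`. -/
lemma lintegral_le_liminf_of_weakConv {Ω : Type*} [PseudoMetricSpace Ω] [MeasurableSpace Ω]
    [BorelSpace Ω] {P : Measure Ω} {Pν : ℕ → Measure Ω} [IsProbabilityMeasure P]
    [∀ ν, IsProbabilityMeasure (Pν ν)] (hweak : WeakConv Pν P)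
    {g : Ω → ENNReal} {h : ℕ → Ω → ENNReal} (hg : Measurable g) (hh : ∀ ν, Measurable (h ν))
    (hlim : ∀ᵐ ξ ∂P, ∀ c < g ξ, ∀ᶠ p in atTop ×ˢ 𝓝 ξ, c < h p.1 p.2) :
    ∫⁻ ξ, g ξ ∂P ≤ liminf (fun ν => ∫⁻ ξ, h ν ξ ∂(Pν ν)) atTop := by
  -- Levelwise comparison of the layer-cake integrands, followed by the usual Fatou lemma in `t`.
  have key : ∀ c : ENNReal, P {ξ | c < g ξ} ≤ liminf (fun ν => Pν ν {ξ | c < h ν ξ}) atTop := by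
    intro c
    let U : ℕ → Set Ω := fun N => interior {ξ | ∀ ν ≥ N, c < h ν ξ}
    have hmono : Monotone U := fun N M hNM =>
      interior_mono fun ξ hξ ν hν => hξ ν (hNM.trans hν)
    have hcover : P {ξ | c < g ξ} ≤ P (⋃ N, U N) := by
      refine measure_mono_ae ?_
      filter_upwards [hlim] with ξ hξ hc
      obtain ⟨pa, hpa, pb, hpb, hp⟩ := eventually_prod_iff.1 (hξ c hc)
      obtain ⟨N, hN⟩ := eventually_atTop.1 hpa
      exact mem_iUnion.2 ⟨N, mem_interior_iff_mem_nhds.2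
        (hpb.mono fun ζ hζ ν hν => hp (hN ν hν) hζ)⟩
    refine hcover.trans ?_
    rw [hmono.measure_iUnion]
    refine iSup_le fun N => (hweak.le_liminf_isOpen isOpen_interior).trans ?_
    refine liminf_le_liminf ?_
    filter_upwards [eventually_ge_atTop N] with ν hν
    exact measure_mono fun ξ hξ => interior_subset hξ ν hν
  simp_rw [lintegral_eq_lintegral_meas_ofReal_lt _ hg,
    fun ν => lintegral_eq_lintegral_meas_ofReal_lt (Pν ν) (hh ν)]
  refine (lintegral_mono fun t => key (ENNReal.ofReal t)).trans (lintegral_liminf_le fun ν => ?_)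
  exact Antitone.measurable fun s t hst => measure_mono fun ω hω =>
    (ENNReal.ofReal_le_ofReal hst).trans_lt hω

/-! ### Shifts, positive parts and tails in `EReal` -/

lemma continuous_toENNReal_add (a : NNReal) :
    Continuous fun y : EReal => (y + ((a : ℝ) : EReal)).toENNReal := by
  refine EReal.continuous_toENNReal.comp (continuous_iff_continuousAt.2 fun y => ?_)
  have : ContinuousAt (fun p : EReal × EReal => p.1 + p.2) (y, ((a : ℝ) : EReal)) :=
    EReal.continuousAt_add (by simp) (by simp)
  exact this.comp (f := fun y : EReal => (y, ((a : ℝ) : EReal))) (by fun_prop)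

/-- Joint lower-limit inequalities survive composition with a monotone continuous function. -/
lemma eventually_lt_comp {Ω : Type*} [TopologicalSpace Ω] {ξ : Ω} {y : EReal}
    {G : ℕ → Ω → EReal} {φ : EReal → ENNReal} (hφ : Continuous φ) (hm : Monotone φ)
    (hlim : ∀ c < y, ∀ᶠ p in atTop ×ˢ 𝓝 ξ, c < G p.1 p.2) {c : ENNReal} (hc : c < φ y) :
    ∀ᶠ p in atTop ×ˢ 𝓝 ξ, c < φ (G p.1 p.2) := by
  rcases eq_or_ne y ⊥ with rfl | hy
  · exact Eventually.of_forall fun p => hc.trans_le (hm bot_le)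
  · have hn : {z | c < φ z} ∈ 𝓝 y := (isOpen_lt continuous_const hφ).mem_nhds hc
    obtain ⟨l, hl, hsub⟩ := exists_Ioc_subset_of_mem_nhds hn ⟨⊥, bot_lt_iff_ne_bot.2 hy⟩
    refine (hlim l hl).mono fun p hp => ?_
    rcases le_total (G p.1 p.2) y with h | h
    · exact hsub ⟨hp, h⟩
    · exact hc.trans_le (hm h)

/-- Splitting off the tail: `(y + a)⁺ + y⁻ ≤ y⁺ + a + (y · 1{y ≤ -a})⁻`. -/
lemma toENNReal_add_neg_le (y : EReal) (a : NNReal) :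
    (y + ((a : ℝ) : EReal)).toENNReal + (-y).toENNReal ≤
      y.toENNReal + a + (-(if y ≤ ((-(a : ℝ) : ℝ) : EReal) then y else 0)).toENNReal := by
  induction y with
  | bot => simp
  | top => simp
  | coe y =>
    have ha : (0 : ℝ) ≤ a := a.2
    rw [← EReal.coe_add, ← EReal.coe_neg,
      ← ENNReal.ofReal_coe_nnreal (p := a)]
    split_ifs with h
    · rw [EReal.coe_le_coe_iff] at h
      rw [← EReal.coe_neg]
      simp only [EReal.real_coe_toENNReal]
      rw [ENNReal.ofReal_of_nonpos (by linarith : y + a ≤ 0), zero_add]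
      exact le_add_self
    · rw [EReal.coe_le_coe_iff] at h
      push Not at h
      simp only [EReal.real_coe_toENNReal, neg_zero, EReal.toENNReal_zero, add_zero]
      rcases le_total 0 y with hy | hy
      · rw [ENNReal.ofReal_of_nonpos (by linarith : -y ≤ 0), add_zero,
          ENNReal.ofReal_add hy ha]
      · rw [ENNReal.ofReal_of_nonpos hy, zero_add, ← ENNReal.ofReal_add (by linarith)
          (by linarith)]
        exact ENNReal.ofReal_le_ofReal (by linarith)

lemma toENNReal_neg_le (y : EReal) (a : NNReal) :
    (-y).toENNReal ≤
      a + (-(if y ≤ ((-(a : ℝ) : ℝ) : EReal) then y else 0)).toENNReal := by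
  split_ifs with h
  · exact le_add_self
  · push Not at h
    have h2 : -y ≤ ((a : ℝ) : EReal) := by
      rw [EReal.neg_le]; simpa using h.le
    have := EReal.toENNReal_le_toENNReal h2
    simpa [ENNReal.ofReal_coe_nnreal] using this

lemma toENNReal_add_le_add_neg (y : EReal) (a : NNReal) :
    y.toENNReal + a ≤ (y + ((a : ℝ) : EReal)).toENNReal + (-y).toENNReal := by
  induction y with
  | bot => simp
  | top => simp
  | coe y =>
    have ha : (0 : ℝ) ≤ a := a.2
    rw [← EReal.coe_add, ← EReal.coe_neg, ← ENNReal.ofReal_coe_nnreal (p := a)]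
    simp only [EReal.real_coe_toENNReal]
    rcases le_total 0 y with hy | hy
    · rw [ENNReal.ofReal_add hy ha]
      exact le_self_add
    · rw [ENNReal.ofReal_of_nonpos hy, zero_add]
      refine le_trans (ENNReal.ofReal_le_ofReal ?_) ENNReal.ofReal_add_le
      linarith

lemma erealToENN_eq (y : EReal) : erealToENN y = y.toENNReal := rfl

lemma measurable_truncBelow {Ω : Type*} [MeasurableSpace Ω] {g : Ω → EReal} (hg : Measurable g)
    (α : ℝ) : Measurable (truncBelow g α) :=
  Measurable.ite (hg measurableSet_Iic) hg measurable_const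

/-- Uniform control of the negative tails bounds the integrals of the negative parts. -/
lemma lintegral_neg_le {Ω : Type*} [MeasurableSpace Ω] (μ : Measure Ω) [IsProbabilityMeasure μ]
    {G : Ω → EReal} {a ε : NNReal}
    (h : ∫⁻ ξ, (-(truncBelow G (-(a : ℝ)) ξ)).toENNReal ∂μ ≤ ε) :
    ∫⁻ ξ, (-(G ξ)).toENNReal ∂μ ≤ a + ε := by
  calc ∫⁻ ξ, (-(G ξ)).toENNReal ∂μ
      ≤ ∫⁻ ξ, (a + (-(truncBelow G (-(a : ℝ)) ξ)).toENNReal) ∂μ :=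
        lintegral_mono fun ξ => toENNReal_neg_le (G ξ) a
    _ = a + ∫⁻ ξ, (-(truncBelow G (-(a : ℝ)) ξ)).toENNReal ∂μ := by
        rw [lintegral_add_left measurable_const]; simp
    _ ≤ a + ε := by gcongr

lemma coe_coe_nnreal (x : NNReal) : ((x : ENNReal) : EReal) = ((x : ℝ) : EReal) := rfl

lemma real_add_lt_of_sub {d : ℝ} {a : NNReal} {s t K : ENNReal}
    (hd : (d : EReal) < (s : EReal) - t) (ht : t ≠ ⊤) (hK : s + a ≤ K + t) :
    ((d + a : ℝ) : EReal) < K := by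
  rcases eq_or_ne K ⊤ with rfl | hKtop
  · exact EReal.coe_lt_top _
  have hs : s ≠ ⊤ := ne_top_of_le_ne_top (by finiteness) (le_self_add.trans hK)
  lift K to NNReal using hKtop
  lift t to NNReal using ht
  lift s to NNReal using hs
  have hK2 : (s : ℝ) + a ≤ K + t := by exact_mod_cast hK
  have hd2 : d < (s : ℝ) - t := by
    rw [coe_coe_nnreal, coe_coe_nnreal, ← EReal.coe_sub] at hd
    exact EReal.coe_lt_coe_iff.1 hd
  rw [coe_coe_nnreal, EReal.coe_lt_coe_iff]
  linarith

lemma real_le_sub_of_add_le {c d : ℝ} {a ε : NNReal} {A B H : ENNReal}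
    (hH : ((d + a : ℝ) : EReal) < H) (hc : d = c + ε) (h : H + B ≤ A + a + ε) (hB : B ≠ ⊤) :
    (c : EReal) ≤ (A : EReal) - B := by
  lift B to NNReal using hB
  rcases eq_or_ne A ⊤ with rfl | hA
  · have : ((⊤ : ENNReal) : EReal) - ((B : ENNReal) : EReal) = ⊤ := by
      rw [EReal.coe_ennreal_top]; exact EReal.top_sub_coe (B : ℝ)
    exact this ▸ le_top
  have hHtop : H ≠ ⊤ := ne_top_of_le_ne_top (by finiteness) (le_self_add.trans h)
  lift A to NNReal using hA
  lift H to NNReal using hHtop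
  have h1 : (H : ℝ) + B ≤ A + a + ε := by exact_mod_cast h
  have h2 : d + a < (H : ℝ) := EReal.coe_lt_coe_iff.1 (coe_coe_nnreal H ▸ hH)
  rw [coe_coe_nnreal, coe_coe_nnreal, ← EReal.coe_sub, EReal.coe_le_coe_iff]
  linarith

lemma eventually_real_lt_of_le_liminf {K : ENNReal} {H : ℕ → ENNReal}
    (hK : K ≤ liminf H atTop) {r : ℝ} (hr : (r : EReal) < K) :
    ∀ᶠ ν in atTop, (r : EReal) < H ν := by
  rcases lt_or_ge r 0 with h | h
  · exact Eventually.of_forall fun ν =>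
      lt_of_lt_of_le (by exact_mod_cast h) (EReal.coe_ennreal_nonneg (H ν))
  · have e : ((ENNReal.ofReal r : ENNReal) : EReal) = r := by simp [h]
    rw [← e, EReal.coe_ennreal_lt_coe_ennreal_iff] at hr
    filter_upwards [eventually_lt_of_lt_liminf (hr.trans_le hK)] with ν hν
    rw [← e]
    exact_mod_cast hν

/-! ### Lower limits of expectations -/

/-- The lower half of the convergence of expectations: joint lower limits together with
asymptotically negligible negative tails give `∫ g ∂P ≤ liminf ∫ G ν ∂(Pν ν)`. -/
lemma eintegral_le_liminf {Ω : Type*} [PseudoMetricSpace Ω] [MeasurableSpace Ω]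
    [BorelSpace Ω] {P : Measure Ω} {Pν : ℕ → Measure Ω} [IsProbabilityMeasure P]
    [∀ ν, IsProbabilityMeasure (Pν ν)] (hweak : WeakConv Pν P)
    {g : Ω → EReal} {G : ℕ → Ω → EReal} (hg : Measurable g) (hG : ∀ ν, Measurable (G ν))
    (hlim : ∀ᵐ ξ ∂P, ∀ c < g ξ, ∀ᶠ p in atTop ×ˢ 𝓝 ξ, c < G p.1 p.2)
    (htail : ∀ ε : NNReal, 0 < ε → ∃ a : NNReal, ∀ᶠ ν in atTop,
      ∫⁻ ξ, (-(truncBelow (G ν) (-(a : ℝ)) ξ)).toENNReal ∂(Pν ν) ≤ ε) :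
    eintegral P g ≤ liminf (fun ν => eintegral (Pν ν) (G ν)) atTop := by
  unfold eintegral
  simp only [erealToENN_eq]
  set s := ∫⁻ ξ, (g ξ).toENNReal ∂P with hs
  set t := ∫⁻ ξ, (-(g ξ)).toENNReal ∂P with ht
  rcases eq_or_ne t ⊤ with htop | htop
  · simp [htop]
  refine EReal.ge_of_forall_gt_iff_ge.1 fun c hc => ?_
  -- The gap `ε = d - c` absorbs the tail error.
  obtain ⟨d, hcd, hd⟩ := EReal.lt_iff_exists_real_btwn.1 hc
  rw [EReal.coe_lt_coe_iff] at hcd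
  obtain ⟨ε, hε⟩ : ∃ ε : NNReal, (ε : ℝ) = d - c := ⟨(d - c).toNNReal, by simp [hcd.le]⟩
  obtain ⟨a, ha⟩ := htail ε (by rw [← NNReal.coe_pos, hε]; linarith)
  have hφ := continuous_toENNReal_add a
  have hφm : Monotone fun y : EReal => (y + ((a : ℝ) : EReal)).toENNReal := fun x y h =>
    EReal.toENNReal_le_toENNReal (by gcongr)
  have hK : s + a ≤ ∫⁻ ξ, (g ξ + ((a : ℝ) : EReal)).toENNReal ∂P + t := by
    have hn : Measurable fun ξ => (-(g ξ)).toENNReal := hg.neg.ereal_toENNReal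
    rw [hs, ht, ← lintegral_add_right _ hn]
    calc _ = ∫⁻ ξ, ((g ξ).toENNReal + a) ∂P := by
          rw [lintegral_add_right _ measurable_const]; simp
      _ ≤ _ := lintegral_mono fun ξ => toENNReal_add_le_add_neg (g ξ) a
  have hF : ∫⁻ ξ, (g ξ + ((a : ℝ) : EReal)).toENNReal ∂P ≤
      liminf (fun ν => ∫⁻ ξ, (G ν ξ + ((a : ℝ) : EReal)).toENNReal ∂(Pν ν)) atTop := by
    refine lintegral_le_liminf_of_weakConv hweak (hφ.measurable.comp hg)
      (fun ν => hφ.measurable.comp (hG ν)) ?_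
    filter_upwards [hlim] with ξ hξ k hk
    exact eventually_lt_comp hφ hφm hξ hk
  have hev := eventually_real_lt_of_le_liminf hF (real_add_lt_of_sub hd htop hK)
  refine le_liminf_of_le (by isBoundedDefault) ?_
  filter_upwards [hev, ha] with ν h1 h2
  refine real_le_sub_of_add_le (ε := ε) h1 (by rw [hε]; ring) ?_
    (ne_top_of_le_ne_top (by finiteness) (lintegral_neg_le _ h2))
  have hn : Measurable fun ξ => (-(G ν ξ)).toENNReal := (hG ν).neg.ereal_toENNReal
  have hnt : Measurable fun ξ => (-(truncBelow (G ν) (-(a : ℝ)) ξ)).toENNReal :=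
    (measurable_truncBelow (hG ν) _).neg.ereal_toENNReal
  rw [← lintegral_add_right _ hn]
  calc _ ≤ ∫⁻ ξ, ((G ν ξ).toENNReal + a + (-(truncBelow (G ν) (-(a : ℝ)) ξ)).toENNReal) ∂(Pν ν) :=
        lintegral_mono fun ξ => toENNReal_add_neg_le (G ν ξ) a
    _ = ∫⁻ ξ, (G ν ξ).toENNReal ∂(Pν ν) + a +
          ∫⁻ ξ, (-(truncBelow (G ν) (-(a : ℝ)) ξ)).toENNReal ∂(Pν ν) := by
        rw [lintegral_add_right _ hnt,
          lintegral_add_right _ measurable_const]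
        simp
    _ ≤ _ := by gcongr

/-! ### Negation and truncation of `eintegral` -/

lemma eintegral_neg_le {Ω : Type*} [MeasurableSpace Ω] (μ : Measure Ω) (g : Ω → EReal) :
    eintegral μ (fun ξ => -(g ξ)) ≤ -eintegral μ g := by
  unfold eintegral
  simp only [neg_neg]
  generalize ∫⁻ ξ, erealToENN (g ξ) ∂μ = s
  generalize ∫⁻ ξ, erealToENN (-(g ξ)) ∂μ = t
  rcases eq_or_ne s ⊤ with rfl | hs
  · simp
  · lift s to NNReal using hs
    rw [EReal.neg_sub (Or.inl (by simp)) (Or.inl (by simp)), add_comm, sub_eq_add_neg]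

/-- Equality in `eintegral_neg_le` may fail when both parts are infinite, since `⊤ - ⊤ = ⊥`;
integrability of the positive part excludes this. -/
lemma neg_eintegral_le {Ω : Type*} [MeasurableSpace Ω] (μ : Measure Ω) (g : Ω → EReal)
    (h : ∫⁻ ξ, (g ξ).toENNReal ∂μ ≠ ⊤) :
    -eintegral μ g ≤ eintegral μ (fun ξ => -(g ξ)) := by
  unfold eintegral
  simp only [neg_neg, erealToENN_eq]
  generalize ∫⁻ ξ, (g ξ).toENNReal ∂μ = s at *
  generalize ∫⁻ ξ, (-(g ξ)).toENNReal ∂μ = t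
  lift s to NNReal using h
  rw [EReal.neg_sub (Or.inl (by simp)) (Or.inl (by simp)), add_comm, sub_eq_add_neg]

/-- A lower bound on the expectation of the lower truncation bounds its negative part, because
the truncation at a nonpositive level is nonpositive. -/
lemma lintegral_neg_truncBelow_le {Ω : Type*} [MeasurableSpace Ω] (μ : Measure Ω)
    {g : Ω → EReal} {a ε : NNReal}
    (h : ((-(ε : ℝ) : ℝ) : EReal) < eintegral μ (truncBelow g (-(a : ℝ)))) :
    ∫⁻ ξ, (-(truncBelow g (-(a : ℝ)) ξ)).toENNReal ∂μ ≤ ε := by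
  have h0 : ∀ ξ, (truncBelow g (-(a : ℝ)) ξ).toENNReal = 0 := fun ξ => by
    refine EReal.toENNReal_of_nonpos ?_
    unfold truncBelow
    split_ifs with hξ
    · exact hξ.trans (by exact_mod_cast neg_nonpos.2 a.2)
    · exact le_rfl
  unfold eintegral at h
  simp only [erealToENN_eq, h0, lintegral_zero] at h
  generalize ∫⁻ ξ, (-(truncBelow g (-(a : ℝ)) ξ)).toENNReal ∂μ = t at *
  rw [EReal.coe_ennreal_zero, zero_sub, EReal.coe_neg, EReal.neg_lt_neg_iff] at h
  rw [← coe_coe_nnreal, EReal.coe_ennreal_lt_coe_ennreal_iff] at h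
  exact h.le

lemma lintegral_truncAbove_le {Ω : Type*} [MeasurableSpace Ω] (μ : Measure Ω)
    {g : Ω → EReal} {a ε : NNReal}
    (h : eintegral μ (truncAbove g (a : ℝ)) < ((ε : ℝ) : EReal)) :
    ∫⁻ ξ, (truncAbove g (a : ℝ) ξ).toENNReal ∂μ ≤ ε := by
  have h0 : ∀ ξ, (-(truncAbove g (a : ℝ) ξ)).toENNReal = 0 := fun ξ => by
    refine EReal.toENNReal_of_nonpos ?_
    unfold truncAbove
    split_ifs with hξ
    · rw [EReal.neg_le, neg_zero]
      exact le_trans (by exact_mod_cast a.2) hξ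
    · simp
  unfold eintegral at h
  simp only [erealToENN_eq, h0, lintegral_zero] at h
  rw [EReal.coe_ennreal_zero, sub_zero] at h
  rw [← coe_coe_nnreal, EReal.coe_ennreal_lt_coe_ennreal_iff] at h
  exact h.le

lemma neg_truncBelow_neg {Ω : Type*} (g : Ω → EReal) (a : ℝ) (ξ : Ω) :
    -(truncBelow (fun ξ => -(g ξ)) (-a) ξ) = truncAbove g a ξ := by
  unfold truncBelow truncAbove
  simp only [EReal.coe_neg, EReal.neg_le_neg_iff]
  split_ifs <;> simp

/-- Epi-convergence of expectation functions under varying measures and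
integrands (Feinberg–Kasyanov–Liang). -/
theorem epi_convergence_of_expectations {n m : ℕ}
    (X : Set (EuclideanSpace ℝ (Fin n))) (hX : IsClosed X)
    (Ξ : Set (EuclideanSpace ℝ (Fin m))) (hΞ : IsClosed Ξ)
    (P : Measure Ξ) (Pν : ℕ → Measure Ξ)
    [IsProbabilityMeasure P] [∀ ν, IsProbabilityMeasure (Pν ν)]
    (hweak : WeakConv Pν P)
    (f : EuclideanSpace ℝ (Fin n) → Ξ → EReal)
    (fν : ℕ → EuclideanSpace ℝ (Fin n) → Ξ → EReal)
    -- (i) measurability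
    (hmeas : ∀ xb ∈ X, Measurable (f xb) ∧ ∀ ν, Measurable (fν ν xb))
    -- (ii) asymptotic inf-integrability and the liminf condition
    (hinf : ∀ xb ∈ X,
      liminfAlphaBot (fun α =>
        liminfNuX X xb (fun ν x => eintegral (Pν ν) (truncBelow (fν ν x) α))) = 0)
    (hliminf : ∀ xb ∈ X, ∀ᵐ ξb ∂P,
      f xb ξb ≤ liminfNuXXi X xb ξb (fun ν x ξ => fν ν x ξ))
    -- (iii) asymptotic sup-integrability and the limsup condition along some sequence
    (hsup : ∀ xb ∈ X, ∃ xs : ℕ → EuclideanSpace ℝ (Fin n),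
      (∀ ν, xs ν ∈ X) ∧ Tendsto xs atTop (𝓝 xb) ∧
      limsupAlphaTop (fun α =>
        limsupNu (fun ν => eintegral (Pν ν) (truncAbove (fν ν (xs ν)) α))) = 0 ∧
      ∀ᵐ ξb ∂P, limsupNuXi ξb (fun ν ξ => fν ν (xs ν) ξ) ≤ f xb ξb) :
    EpiConvergesOn X (fun ν x => eintegral (Pν ν) (fν ν x))
      (fun x => eintegral P (f x)) := by
  intro xb hxb
  have tailBelow : ∀ zs : ℕ → EuclideanSpace ℝ (Fin n), (∀ ν, zs ν ∈ X) →
      Tendsto zs atTop (𝓝 xb) → ∀ ε : NNReal, 0 < ε → ∃ a : NNReal, ∀ᶠ ν in atTop,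
        ∫⁻ ξ, (-(truncBelow (fν ν (zs ν)) (-(a : ℝ)) ξ)).toENNReal ∂(Pν ν) ≤ ε := by
    intro zs hzs hz ε hε
    have h : ((-(ε : ℝ) : ℝ) : EReal) < liminfAlphaBot (fun α =>
        liminfNuX X xb (fun ν x => eintegral (Pν ν) (truncBelow (fν ν x) α))) := by
      rw [hinf xb hxb]
      exact_mod_cast neg_lt_zero.2 hε
    unfold liminfAlphaBot at h
    obtain ⟨αb, h⟩ := lt_iSup_iff.1 h
    -- The level is lowered to `-|αb|`, so that the truncation is nonpositive.
    have h := h.trans_le (iInf₂_le (-|αb|) (neg_abs_le αb))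
    unfold liminfNuX at h
    simp only [lt_iSup_iff] at h
    obtain ⟨δ, hδ, N, h⟩ := h
    refine ⟨⟨|αb|, abs_nonneg _⟩, ?_⟩
    filter_upwards [eventually_ge_atTop N, Metric.tendsto_nhds.1 hz δ hδ] with ν hν hd
    refine lintegral_neg_truncBelow_le _ (h.trans_le ?_)
    exact (iInf₂_le ν hν).trans ((iInf₂_le (zs ν) (hzs ν)).trans (iInf_le _ hd.le))
  have limBelow : ∀ zs : ℕ → EuclideanSpace ℝ (Fin n), (∀ ν, zs ν ∈ X) →
      Tendsto zs atTop (𝓝 xb) → ∀ᵐ ξ ∂P, ∀ c < f xb ξ,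
        ∀ᶠ p in atTop ×ˢ 𝓝 ξ, c < fν p.1 (zs p.1) p.2 := by
    intro zs hzs hz
    filter_upwards [hliminf xb hxb] with ξ hξ c hc
    have h := hc.trans_le hξ
    unfold liminfNuXXi at h
    simp only [lt_iSup_iff] at h
    obtain ⟨δ, hδ, N, h⟩ := h
    have h1 : ∀ᶠ ν in atTop, N ≤ ν ∧ dist (zs ν) xb < δ :=
      (eventually_ge_atTop N).and (Metric.tendsto_nhds.1 hz δ hδ)
    filter_upwards [h1.prod_mk (Metric.ball_mem_nhds ξ hδ)] with p hp
    refine h.trans_le ((iInf₂_le p.1 hp.1.1).trans ((iInf₂_le (zs p.1) (hzs p.1)).trans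
      ((iInf_le _ hp.1.2.le).trans (iInf₂_le p.2 ?_))))
    exact (Metric.mem_ball.1 hp.2).le
  refine ⟨fun zs hzs hz => eintegral_le_liminf hweak (hmeas xb hxb).1
    (fun ν => (hmeas _ (hzs ν)).2 ν) (limBelow zs hzs hz) (tailBelow zs hzs hz), ?_⟩
  obtain ⟨xs, hxs, hx, htail, hlim⟩ := hsup xb hxb
  refine ⟨xs, hxs, hx, ?_⟩
  have hgm := (hmeas xb hxb).1
  have hGm : ∀ ν, Measurable (fν ν (xs ν)) := fun ν => (hmeas _ (hxs ν)).2 ν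
  have tailAbove : ∀ ε : NNReal, 0 < ε → ∃ a : NNReal, ∀ᶠ ν in atTop,
      ∫⁻ ξ, (-(truncBelow (fun ξ => -(fν ν (xs ν) ξ)) (-(a : ℝ)) ξ)).toENNReal ∂(Pν ν) ≤ ε := by
    intro ε hε
    have h : limsupAlphaTop (fun α =>
        limsupNu (fun ν => eintegral (Pν ν) (truncAbove (fν ν (xs ν)) α))) <
          ((ε : ℝ) : EReal) := by
      rw [htail]
      exact_mod_cast hε
    unfold limsupAlphaTop at h
    obtain ⟨αb, h⟩ := iInf_lt_iff.1 h
    have h := (le_iSup₂ (f := fun α (_ : αb ≤ α) =>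
      limsupNu (fun ν => eintegral (Pν ν) (truncAbove (fν ν (xs ν)) α)))
      |αb| (le_abs_self αb)).trans_lt h
    unfold limsupNu at h
    obtain ⟨N, h⟩ := iInf_lt_iff.1 h
    refine ⟨⟨|αb|, abs_nonneg _⟩, ?_⟩
    filter_upwards [eventually_ge_atTop N] with ν hν
    simp only [neg_truncBelow_neg]
    refine lintegral_truncAbove_le _ (lt_of_le_of_lt ?_ h)
    exact le_iSup₂ (f := fun ν (_ : N ≤ ν) =>
      eintegral (Pν ν) (truncAbove (fν ν (xs ν)) |αb|)) ν hν
  have limAbove : ∀ᵐ ξ ∂P, ∀ c < -(f xb ξ),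
      ∀ᶠ p in atTop ×ˢ 𝓝 ξ, c < -(fν p.1 (xs p.1) p.2) := by
    filter_upwards [hlim] with ξ hξ c hc
    have h := hξ.trans_lt (EReal.lt_neg_comm.1 hc)
    unfold limsupNuXi at h
    simp only [iInf_lt_iff] at h
    obtain ⟨δ, hδ, N, h⟩ := h
    filter_upwards [(eventually_ge_atTop N).prod_mk (Metric.ball_mem_nhds ξ hδ)] with p hp
    rw [EReal.lt_neg_comm]
    refine lt_of_le_of_lt ?_ h
    refine le_trans ?_ (le_iSup₂ (f := fun ν (_ : N ≤ ν) =>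
      ⨆ (ξ' : Ξ) (_ : dist ξ' ξ ≤ δ), fν ν (xs ν) ξ') p.1 hp.1)
    exact le_iSup₂ (f := fun (ξ' : Ξ) (_ : dist ξ' ξ ≤ δ) => fν p.1 (xs p.1) ξ') p.2
      (Metric.mem_ball.1 hp.2).le
  -- The lower-limit hypothesis bounds `f⁺` by the positive parts along `xs`, whose integrals
  -- are bounded by the upper-tail hypothesis.
  have hfin : ∫⁻ ξ, (f xb ξ).toENNReal ∂P ≠ ⊤ := by
    have hF : ∫⁻ ξ, (f xb ξ).toENNReal ∂P ≤
        liminf (fun ν => ∫⁻ ξ, (fν ν (xs ν) ξ).toENNReal ∂(Pν ν)) atTop := by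
      refine lintegral_le_liminf_of_weakConv hweak hgm.ereal_toENNReal
        (fun ν => (hGm ν).ereal_toENNReal) ?_
      filter_upwards [limBelow xs hxs hx] with ξ hξ k hk
      exact eventually_lt_comp (G := fun ν ξ => fν ν (xs ν) ξ) EReal.continuous_toENNReal
        (fun _ _ h => EReal.toENNReal_le_toENNReal h) hξ hk
    obtain ⟨a, ha⟩ := tailAbove 1 one_pos
    have hb : ∀ᶠ ν in atTop, ∫⁻ ξ, (fν ν (xs ν) ξ).toENNReal ∂(Pν ν) ≤ a + (1 : NNReal) := by
      filter_upwards [ha] with ν hν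
      simpa using lintegral_neg_le (Pν ν) hν
    refine ne_top_of_le_ne_top (b := (a : ENNReal) + (1 : NNReal)) (by finiteness) (hF.trans ?_)
    exact liminf_le_of_frequently_le' hb.frequently
  have main := eintegral_le_liminf hweak hgm.neg (fun ν => (hGm ν).neg) limAbove tailAbove
  have h1 : -eintegral P (f xb) ≤ -limsup (fun ν => eintegral (Pν ν) (fν ν (xs ν))) atTop := by
    rw [← EReal.liminf_neg]
    exact (neg_eintegral_le P _ hfin).trans (main.trans
      (liminf_le_liminf (Eventually.of_forall fun ν => eintegral_neg_le (Pν ν) _)))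
  exact EReal.neg_le_neg_iff.1 h1

end
end

section
/- Finite-horizon consistency of stochastic dynamic programming: In the standing setting, let Assumption 1 hold and suppose 𝐏_ν converges weakly to 𝐏, φ_ν epi-converges to φ and φ_ν converges pointwise to φ on 𝒳 × 𝒳 × Ξ. Fix T ∈ ℕ and let V^{T+1} = 0, V^t = B(V^{t+1}) and V_ν^{T+1} = 0, V_ν^t = B_ν(V_ν^{t+1}) for t ∈ {1,…,T}, all real valued. Suppose for each t ∈ {1,…,T}: the sequence (V_ν^{t+1})_ν is equi-lsc on 𝒳, and for each x̄ ∈ 𝒳: (i) liminf_{α→−∞} liminf_{(ν,x)→(∞,x̄)} ∫_Ξ b_ν(V_ν^{t+1})(x,ξ) 1{b_ν(V_ν^{t+1})(x,ξ) ≤ α} d𝐏_ν(ξ) = 0 and the functions b_ν(V_ν^{t+1}) are lsc on 𝒳 × Ξ and form an equi-lsc sequence; (ii) limsup_{α→∞} limsup_{ν→∞} ∫_Ξ b_ν(V_ν^{t+1})(x̄,ξ) 1{b_ν(V_ν^{t+1})(x̄,ξ) ≥ α} d𝐏_ν(ξ) = 0 and the functions b_ν(V_ν^{t+1})(x̄,·)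 are usc on Ξ and form an equi-usc sequence. Then for each t ∈ {1,…,T}, V_ν^{t+1} epi-converges to V^{t+1}, and for every (x,ξ) ∈ 𝒳 × Ξ the outer limit of the sets argmin_{y∈𝒴(x,ξ)} { φ_ν(x,y,ξ) + β V_ν^{t+1}(y) } is contained in argmin_{y∈𝒴(x,ξ)} { φ(x,y,ξ) + β V^{t+1}(y) }, and this latter set is nonempty. -/
/-!
The proof is a backward induction on `t`, propagating *pointwise* convergence `V_ν^t → V^t` on `X`.

Suppose `V_ν^{t+1} → V^{t+1}` pointwise. Equi-lower semicontinuity upgrades this to the joint lower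
limit `liminf V_ν^{t+1}(y_ν) ≥ V^{t+1}(y)` (`EquiLscOn.eventually_lt`), and epi-convergence of `φ_ν`
gives the same for the stage costs (`EpiConvergesOn.lowerLimitOn`). So the stage objectives converge
pointwise and satisfy the joint lower limit on the compact feasible set; hence their minimal values
converge (`LowerLimitOn.tendsto_iInf`), i.e. `b_ν(V_ν^{t+1})(x,ξ) → b(V^{t+1})(x,ξ)` with a finite
limit, and cluster points of minimizers are minimizers (`LowerLimitOn.outerLimit_argmin_subset`).

For fixed `x`, equi-lower and equi-upper semicontinuity make this convergence continuous in `ξ`: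
`b_ν(V_ν^{t+1})(x,ξ_ν) → b(V^{t+1})(x,ξ)` whenever `ξ_ν → ξ`. Integrals of bounded continuously
convergent integrands converge along weakly convergent measures, because such convergence is uniform
on compact sets and little mass lies outside a large ball (`WeakConv.tendsto_integral_of_bounded`).
The tail conditions remove the boundedness by clamping to `[-α, α]` (`WeakConv.tendsto_eintegral`),
which gives `V_ν^t(x) → V^t(x)`.

Epi-convergence of `V_ν^{t+1}` then follows from the joint lower limit together with constant
recovery sequences.
-/

open Filter MeasureTheory Topology Set

noncomputable section

/-- Integrability of an extended-real-valued function. -/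
def EIntegrable {Ω : Type*} [MeasurableSpace Ω] (P : Measure Ω) (g : Ω → EReal) : Prop :=
  AEMeasurable g P ∧ (∫⁻ ω, erealToENN (g ω) ∂P) < ⊤ ∧ (∫⁻ ω, erealToENN (-(g ω)) ∂P) < ⊤

/-- A sequence of functions is equi-lower semicontinuous on `Z`. -/
def EquiLscOn {E : Type*} [PseudoMetricSpace E] (Z : Set E) (F : ℕ → E → EReal) : Prop :=
  ∀ z ∈ Z,
    limsup (fun ν => F ν z) atTop = ⊥ ∨
    ∀ ρ ε : ℝ, 0 < ρ → 0 < ε → ∃ ν' : ℕ, ∃ δ : ℝ, 0 < δ ∧ ∀ ν, ν' ≤ ν →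
      min (F ν z - (ε : EReal)) (ρ : EReal) ≤
        ⨅ (w : E) (_ : w ∈ Z) (_ : dist w z ≤ δ), F ν w

/-- Equi-upper semicontinuity on `Z`. -/
def EquiUscOn {E : Type*} [PseudoMetricSpace E] (Z : Set E) (F : ℕ → E → EReal) : Prop :=
  EquiLscOn Z (fun ν z => -(F ν z))

/-- The outer limit of a sequence of sets in a topological space. -/
def OuterLimit {X : Type*} [TopologicalSpace X] (S : ℕ → Set X) : Set X :=
  {x | ∃ φ : ℕ → ℕ, StrictMono φ ∧ ∃ s : ℕ → X, (∀ κ, s κ ∈ S (φ κ)) ∧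
    Tendsto s atTop (𝓝 x)}

/-- The set of minimizers of `g` over `S`. -/
def ArgminOn {E : Type*} (S : Set E) (g : E → EReal) : Set E :=
  {y ∈ S | ∀ z ∈ S, g y ≤ g z}

/-- `b(f)(x,ξ) = inf_{y ∈ 𝒴(x,ξ)} { φ(x,y,ξ) + β f(y) }`. -/
def bop {E Ξ' : Type*} (Y : E → Ξ' → Set E) (β : ℝ) (φ : E → E → Ξ' → ℝ)
    (f : E → EReal) (x : E) (ξ : Ξ') : EReal :=
  ⨅ (y : E) (_ : y ∈ Y x ξ), (((φ x y ξ : ℝ) : EReal) + (β : EReal) * f y)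

/-! ### Lower limits along product filters -/

lemma eventually_forall_mem_of_isCompact {ι E : Type*} [TopologicalSpace E] {K : Set E}
    (hK : IsCompact K) {l : Filter ι} {p : ι → E → Prop}
    (h : ∀ y ∈ K, ∀ᶠ q in l ×ˢ 𝓝[K] y, p q.1 q.2) : ∀ᶠ i in l, ∀ y ∈ K, p i y := by
  refine hK.induction_on (p := fun s => ∀ᶠ i in l, ∀ y ∈ s, p i y) (by simp) ?_ ?_ ?_
  · intro s t hst ht
    filter_upwards [ht] with i hi y hy using hi y (hst hy)
  · intro s t hs ht
    filter_upwards [hs, ht] with i h1 h2 y hy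
    exact hy.elim (h1 y) (h2 y)
  · intro y hy
    obtain ⟨pa, hpa, pb, hpb, hp⟩ := eventually_prod_iff.1 (h y hy)
    exact ⟨{w | pb w}, hpb, hpa.mono fun i hi w hw => hp hi hw⟩

/-- The joint lower-limit half of epi-convergence on `Z` for real-valued functions, as an
eventual statement along `(ν, w) → (∞, z)` with `w ∈ Z`. -/
def LowerLimitOn {E : Type*} [TopologicalSpace E] (Z : Set E) (F : ℕ → E → ℝ) (f : E → ℝ) :
    Prop :=
  ∀ z ∈ Z, ∀ a < f z, ∀ᶠ q in (atTop : Filter ℕ) ×ˢ 𝓝[Z] z, a < F q.1 q.2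

/-- Epi-convergence only controls full sequences; a violating sequence of pairs `(ν_k, w_k)` is
turned into a full sequence by filling the gaps with the limit point `z`. -/
lemma EpiConvergesOn.lowerLimitOn {E : Type*} [TopologicalSpace E] [FirstCountableTopology E]
    {Z : Set E} {F : ℕ → E → ℝ} {f : E → ℝ}
    (h : EpiConvergesOn Z (fun ν z => (F ν z : EReal)) (fun z => (f z : EReal))) :
    LowerLimitOn Z F f := by
  intro z hz a ha
  by_contra hcon
  rw [not_eventually] at hcon
  have hcon' : ∃ᶠ q in (atTop : Filter ℕ) ×ˢ 𝓝[Z] z, q.2 ∈ Z ∧ ¬ a < F q.1 q.2 := by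
    have hev : ∀ᶠ q in (atTop : Filter ℕ) ×ˢ 𝓝[Z] z, q.2 ∈ Z :=
      tendsto_snd.eventually (eventually_mem_nhdsWithin (a := z) (s := Z))
    exact (hcon.and_eventually hev).mono fun q hq => ⟨hq.2, hq.1⟩
  obtain ⟨q, hq, hqP⟩ := exists_seq_forall_of_frequently hcon'
  obtain ⟨s, hs, hsm⟩ := strictMono_subseq_of_tendsto_atTop (tendsto_fst.comp hq)
  have hw : Tendsto (fun k => (q (s k)).2) atTop (𝓝 z) :=
    (tendsto_snd.comp (hq.comp hs.tendsto_atTop)).mono_right nhdsWithin_le_nhds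
  set N : ℕ → ℕ := fun k => (q (s k)).1 with hN
  have hNm : StrictMono N := hsm
  set w : ℕ → E := Function.extend N (fun k => (q (s k)).2) (fun _ => z) with hwdef
  have hwN : ∀ k, w (N k) = (q (s k)).2 := fun k => hNm.injective.extend_apply _ _ _
  have hwz : ∀ ν, (¬ ∃ k, N k = ν) → w ν = z := fun ν hν =>
    Function.extend_apply' _ _ _ hν
  have hwZ : ∀ ν, w ν ∈ Z := by
    intro ν
    by_cases hν : ∃ k, N k = ν
    · obtain ⟨k, rfl⟩ := hν
      rw [hwN]; exact (hqP _).1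
    · rw [hwz ν hν]; exact hz
  have hwt : Tendsto w atTop (𝓝 z) := by
    intro U hU
    obtain ⟨k0, hk0⟩ := eventually_atTop.1 (hw.eventually hU)
    refine mem_map.2 (mem_atTop_sets.2 ⟨N k0, fun ν hν => ?_⟩)
    by_cases hν' : ∃ k, N k = ν
    · obtain ⟨k, rfl⟩ := hν'
      show w (N k) ∈ U
      rw [hwN]; exact hk0 k (hNm.le_iff_le.1 hν)
    · show w ν ∈ U
      rw [hwz ν hν']; exact mem_of_mem_nhds hU
  have hlim := (h z hz).1 w hwZ hwt
  have hev := eventually_lt_of_lt_liminf (lt_of_lt_of_le (EReal.coe_lt_coe_iff.2 ha) hlim)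
  obtain ⟨k, hk⟩ := (hNm.tendsto_atTop.eventually hev).exists
  rw [hwN] at hk
  exact (hqP (s k)).2 (EReal.coe_lt_coe_iff.1 hk)

/-- If the functions converge to a finite value at `z`, then equi-lower semicontinuity bounds them
from below jointly in `(ν, w)` near `(∞, z)`. -/
lemma EquiLscOn.eventually_lt {E : Type*} [PseudoMetricSpace E] {Z : Set E} {F : ℕ → E → EReal}
    (h : EquiLscOn Z F) {z : E} (hz : z ∈ Z) {c : ℝ}
    (hc : Tendsto (fun ν => F ν z) atTop (𝓝 (c : EReal))) {a : ℝ} (ha : a < c) :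
    ∀ᶠ q in (atTop : Filter ℕ) ×ˢ 𝓝[Z] z, (a : EReal) < F q.1 q.2 := by
  rcases h z hz with h | h
  · rw [hc.limsup_eq] at h
    exact absurd h (EReal.coe_ne_bot c)
  · obtain ⟨N, δ, hδ, hN⟩ := h (|c| + 1) ((c - a) / 2) (by positivity) (by linarith)
    have h1 : ∀ᶠ ν in atTop, (((c + a) / 2 : ℝ) : EReal) < F ν z :=
      hc.eventually (lt_mem_nhds (EReal.coe_lt_coe_iff.2 (by linarith)))
    have h2 : ∀ᶠ w in 𝓝[Z] z, w ∈ Z ∧ dist w z ≤ δ :=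
      (eventually_mem_nhdsWithin).and
        (nhdsWithin_le_nhds (Metric.closedBall_mem_nhds z hδ))
    refine eventually_prod_iff.2 ⟨_, h1.and (eventually_ge_atTop N), _, h2, ?_⟩
    rintro ν ⟨hν1, hν2⟩ w ⟨hwZ, hw⟩
    refine lt_of_lt_of_le ?_ ((hN ν hν2).trans (iInf_le_of_le w (iInf_le_of_le hwZ
      (iInf_le_of_le hw le_rfl))))
    refine lt_min ?_ (EReal.coe_lt_coe_iff.2 (by linarith [le_abs_self c]))
    have : (a : EReal) = (((c + a) / 2 : ℝ) : EReal) - (((c - a) / 2 : ℝ) : EReal) := by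
      rw [← EReal.coe_sub]; congr 1; ring
    rw [this]
    exact EReal.sub_lt_sub_of_lt_of_le hν1 le_rfl (EReal.coe_ne_bot _) (EReal.coe_ne_top _)

/-! ### Parametric minimization over a compact set -/

lemma LowerLimitOn.lowerSemicontinuousOn {E : Type*} [TopologicalSpace E] {K : Set E}
    {F : ℕ → E → ℝ} {f : E → ℝ} (h : LowerLimitOn K F f)
    (hp : ∀ y ∈ K, Tendsto (fun ν => F ν y) atTop (𝓝 (f y))) : LowerSemicontinuousOn f K := by
  intro z hz a ha
  obtain ⟨b, hab, hb⟩ := exists_between ha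
  obtain ⟨pa, hpa, pb, hpb, hp'⟩ := eventually_prod_iff.1 (h z hz b hb)
  filter_upwards [hpb, eventually_mem_nhdsWithin] with w hw hwK
  refine hab.trans_le (ge_of_tendsto (hp w hwK) ?_)
  filter_upwards [hpa] with ν hν using (hp' hν hw).le

lemma LowerLimitOn.tendsto_iInf {E : Type*} [TopologicalSpace E] {K : Set E}
    (hK : IsCompact K) (hne : K.Nonempty)
    {F : ℕ → E → ℝ} {f : E → ℝ} (h : LowerLimitOn K F f)
    (hp : ∀ y ∈ K, Tendsto (fun ν => F ν y) atTop (𝓝 (f y))) :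
    ∃ y ∈ K, (∀ z ∈ K, f y ≤ f z) ∧ (⨅ z ∈ K, (f z : EReal)) = (f y : EReal) ∧
      Tendsto (fun ν => ⨅ z ∈ K, (F ν z : EReal)) atTop (𝓝 (f y : EReal)) := by
  obtain ⟨y, hy, hmin⟩ := (h.lowerSemicontinuousOn hp).exists_isMinOn hne hK
  have hmin' : ∀ z ∈ K, f y ≤ f z := fun z hz => hmin hz
  refine ⟨y, hy, hmin', le_antisymm (iInf₂_le y hy)
    (le_iInf₂ fun z hz => EReal.coe_le_coe_iff.2 (hmin' z hz)), ?_⟩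
  refine tendsto_order.2 ⟨fun a ha => ?_, fun a ha => ?_⟩
  · obtain ⟨r, har, hr⟩ := EReal.lt_iff_exists_real_btwn.1 ha
    have hr' := EReal.coe_lt_coe_iff.1 hr
    filter_upwards [eventually_forall_mem_of_isCompact (p := fun ν w => r < F ν w) hK
      (fun z hz => h z hz r (hr'.trans_le (hmin' z hz)))] with ν hν
    exact har.trans_le (le_iInf₂ fun z hz => EReal.coe_le_coe_iff.2 (hν z hz).le)
  · filter_upwards [((continuous_coe_real_ereal.tendsto _).comp (hp y hy)).eventually
      (gt_mem_nhds ha)] with ν hν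
    exact (iInf₂_le y hy).trans_lt hν

lemma LowerLimitOn.outerLimit_argmin_subset {E : Type*} [TopologicalSpace E] [T2Space E]
    {K : Set E} (hK : IsCompact K) {F : ℕ → E → ℝ} {f : E → ℝ} (h : LowerLimitOn K F f)
    (hp : ∀ y ∈ K, Tendsto (fun ν => F ν y) atTop (𝓝 (f y))) :
    OuterLimit (fun ν => ArgminOn K (fun y => (F ν y : EReal))) ⊆
      ArgminOn K (fun y => (f y : EReal)) := by
  rintro y ⟨s, hs, w, hw, hwy⟩
  have hyK : y ∈ K := hK.isClosed.mem_of_tendsto hwy (Eventually.of_forall fun k => (hw k).1)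
  refine ⟨hyK, fun z hz => EReal.coe_le_coe_iff.2 (le_of_forall_lt fun a ha => ?_)⟩
  obtain ⟨b, hab, hb⟩ := exists_between ha
  have hpair : Tendsto (fun k => (s k, w k)) atTop ((atTop : Filter ℕ) ×ˢ 𝓝[K] y) :=
    hs.tendsto_atTop.prodMk (tendsto_nhdsWithin_iff.2
      ⟨hwy, Eventually.of_forall fun k => (hw k).1⟩)
  refine hab.trans_le (ge_of_tendsto ((hp z hz).comp hs.tendsto_atTop) ?_)
  filter_upwards [hpair.eventually (h y hyK b hb)] with k hk
  exact hk.le.trans (EReal.coe_le_coe_iff.1 ((hw k).2 z hz))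

/-! ### Integrals of extended-real-valued functions -/

lemma EIntegrable.real {Ω : Type*} [MeasurableSpace Ω] {P : Measure Ω} {g : Ω → EReal}
    (h : EIntegrable P g) :
    (∀ᵐ ω ∂P, ((g ω).toReal : EReal) = g ω) ∧ Integrable (fun ω => (g ω).toReal) P ∧
      eintegral P g = ((∫ ω, (g ω).toReal ∂P : ℝ) : EReal) := by
  obtain ⟨hm, hp, hn⟩ := h
  have hmp : AEMeasurable (fun ω => erealToENN (g ω)) P := hm.ereal_toENNReal
  have hmn : AEMeasurable (fun ω => erealToENN (-(g ω))) P := hm.neg.ereal_toENNReal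
  have hfin : ∀ᵐ ω ∂P, ((g ω).toReal : EReal) = g ω := by
    filter_upwards [ae_lt_top' hmp hp.ne, ae_lt_top' hmn hn.ne] with ω h1 h2
    refine EReal.coe_toReal (fun ht => ?_) (fun ht => ?_)
    · simp [erealToENN, ht] at h1
    · simp [erealToENN, ht] at h2
  have e1 : ∫⁻ ω, erealToENN (g ω) ∂P = ∫⁻ ω, ENNReal.ofReal (g ω).toReal ∂P := by
    refine lintegral_congr_ae ?_
    filter_upwards [hfin] with ω hω
    rw [← hω]; simp [erealToENN]
  have e2 : ∫⁻ ω, erealToENN (-(g ω)) ∂P = ∫⁻ ω, ENNReal.ofReal (-(g ω).toReal) ∂P := by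
    refine lintegral_congr_ae ?_
    filter_upwards [hfin] with ω hω
    rw [← hω, ← EReal.coe_neg]; simp [erealToENN]
  have hint : Integrable (fun ω => (g ω).toReal) P := by
    refine ⟨hm.ereal_toReal.aestronglyMeasurable, ?_⟩
    rw [hasFiniteIntegral_iff_norm]
    calc ∫⁻ ω, ENNReal.ofReal ‖(g ω).toReal‖ ∂P
        ≤ ∫⁻ ω, (ENNReal.ofReal (g ω).toReal + ENNReal.ofReal (-(g ω).toReal)) ∂P := by
          refine lintegral_mono fun ω => ?_
          rw [Real.norm_eq_abs]
          rcases abs_cases (g ω).toReal with ⟨h, _⟩ | ⟨h, _⟩ <;> rw [h] <;> simp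
      _ = ∫⁻ ω, ENNReal.ofReal (g ω).toReal ∂P + ∫⁻ ω, ENNReal.ofReal (-(g ω).toReal) ∂P :=
          lintegral_add_left' hm.ereal_toReal.ennreal_ofReal _
      _ < ⊤ := ENNReal.add_lt_top.2 ⟨e1 ▸ hp, e2 ▸ hn⟩
  refine ⟨hfin, hint, ?_⟩
  rw [integral_eq_lintegral_pos_part_sub_lintegral_neg_part hint, eintegral, ← e1, ← e2,
    EReal.coe_sub]
  congr 1
  · exact (EReal.coe_ennreal_toReal hp.ne).symm
  · exact (EReal.coe_ennreal_toReal hn.ne).symm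

lemma EIntegrable.ite {Ω : Type*} [MeasurableSpace Ω] {P : Measure Ω} {g : Ω → EReal}
    (h : EIntegrable P g) {s : Set EReal} [DecidablePred (· ∈ s)] (hs : MeasurableSet s) :
    EIntegrable P (fun ω => if g ω ∈ s then g ω else 0) := by
  obtain ⟨hm, hp, hn⟩ := h
  refine ⟨(Measurable.ite hs measurable_id measurable_const).comp_aemeasurable hm,
    (lintegral_mono fun ω => ?_).trans_lt hp, (lintegral_mono fun ω => ?_).trans_lt hn⟩
  all_goals
    by_cases hω : g ω ∈ s
    · simp [hω]
    · simp [hω, erealToENN]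

lemma EIntegrable.eintegral_truncBelow {Ω : Type*} [MeasurableSpace Ω] {P : Measure Ω}
    {g : Ω → EReal} (h : EIntegrable P g) (α : ℝ) :
    Integrable (fun ω => if (g ω).toReal ≤ α then (g ω).toReal else 0) P ∧
    eintegral P (truncBelow g α) =
      ((∫ ω, if (g ω).toReal ≤ α then (g ω).toReal else 0 ∂P : ℝ) : EReal) := by
  classical
  have h' : EIntegrable P (truncBelow g α) := h.ite (s := Set.Iic (α : EReal)) measurableSet_Iic
  have hae : (fun ω => (truncBelow g α ω).toReal) =ᵐ[P]
      fun ω => if (g ω).toReal ≤ α then (g ω).toReal else 0 := by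
    filter_upwards [h.real.1] with ω hω
    by_cases hc : (g ω).toReal ≤ α
    · have : g ω ≤ α := by rw [← hω]; exact_mod_cast hc
      simp [truncBelow, hc, this]
    · have : ¬ g ω ≤ α := by rw [← hω]; exact_mod_cast hc
      simp [truncBelow, hc, this]
  exact ⟨h'.real.2.1.congr hae, by rw [h'.real.2.2, integral_congr_ae hae]⟩

lemma EIntegrable.eintegral_truncAbove {Ω : Type*} [MeasurableSpace Ω] {P : Measure Ω}
    {g : Ω → EReal} (h : EIntegrable P g) (α : ℝ) :
    Integrable (fun ω => if α ≤ (g ω).toReal then (g ω).toReal else 0) P ∧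
    eintegral P (truncAbove g α) =
      ((∫ ω, if α ≤ (g ω).toReal then (g ω).toReal else 0 ∂P : ℝ) : EReal) := by
  classical
  have h' : EIntegrable P (truncAbove g α) := h.ite (s := Set.Ici (α : EReal)) measurableSet_Ici
  have hae : (fun ω => (truncAbove g α ω).toReal) =ᵐ[P]
      fun ω => if α ≤ (g ω).toReal then (g ω).toReal else 0 := by
    filter_upwards [h.real.1] with ω hω
    by_cases hc : α ≤ (g ω).toReal
    · have : α ≤ g ω := by rw [← hω]; exact_mod_cast hc
      simp [truncAbove, hc, this]
    · have : ¬ α ≤ g ω := by rw [← hω]; exact_mod_cast hc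
      simp [truncAbove, hc, this]
  exact ⟨h'.real.2.1.congr hae, by rw [h'.real.2.2, integral_congr_ae hae]⟩

/-! ### Weak convergence with varying integrands -/

lemma continuous_of_tendsto_prod {Ω : Type*} [TopologicalSpace Ω] {u : ℕ → Ω → ℝ} {v : Ω → ℝ}
    (h : ∀ ω, Tendsto (fun q : ℕ × Ω => u q.1 q.2) (atTop ×ˢ 𝓝 ω) (𝓝 (v ω))) :
    Continuous v := by
  refine continuous_iff_continuousAt.2 fun ω => Metric.tendsto_nhds.2 fun ε hε => ?_
  obtain ⟨pa, hpa, pb, hpb, hp⟩ :=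
    eventually_prod_iff.1 (Metric.tendsto_nhds.1 (h ω) (ε / 2) (half_pos hε))
  filter_upwards [hpb] with w hw
  have hlim : Tendsto (fun ν => dist (u ν w) (v ω)) atTop (𝓝 (dist (v w) (v ω))) :=
    Tendsto.dist ((h w).comp (tendsto_id.prodMk tendsto_const_nhds)) tendsto_const_nhds
  refine lt_of_le_of_lt (le_of_tendsto hlim ?_) (half_lt_self hε)
  filter_upwards [hpa] with ν hν using (hp hν hw).le

/-- Integrals of uniformly bounded, continuously convergent integrands converge along a weakly
convergent sequence of probability measures. Mass outside a large ball is controlled by a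
continuous cutoff `χ`; on the ball, continuous convergence is uniform. -/
lemma WeakConv.tendsto_integral_of_bounded {Ω : Type*} [PseudoMetricSpace Ω] [ProperSpace Ω]
    [MeasurableSpace Ω] [BorelSpace Ω] {Pν : ℕ → Measure Ω} {P : Measure Ω}
    [IsProbabilityMeasure P] [∀ ν, IsProbabilityMeasure (Pν ν)] (hw : WeakConv Pν P)
    {u : ℕ → Ω → ℝ} {v : Ω → ℝ} {C : ℝ}
    (hm : ∀ ν, AEStronglyMeasurable (u ν) (Pν ν)) (hu : ∀ ν ω, |u ν ω| ≤ C)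
    (hv : ∀ ω, |v ω| ≤ C)
    (h : ∀ ω, Tendsto (fun q : ℕ × Ω => u q.1 q.2) (atTop ×ˢ 𝓝 ω) (𝓝 (v ω))) :
    Tendsto (fun ν => ∫ ω, u ν ω ∂(Pν ν)) atTop (𝓝 (∫ ω, v ω ∂P)) := by
  obtain ⟨o⟩ : Nonempty Ω := nonempty_of_isProbabilityMeasure P
  have hC : 0 ≤ C := (abs_nonneg _).trans (hv o)
  have hvc : Continuous v := continuous_of_tendsto_prod h
  have hvi : ∀ ν, Integrable v (Pν ν) := fun ν =>
    Integrable.of_bound hvc.aestronglyMeasurable C (Eventually.of_forall hv)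
  have hui : ∀ ν, Integrable (u ν) (Pν ν) := fun ν =>
    Integrable.of_bound (hm ν) C (Eventually.of_forall (hu ν))
  have hdiff : Tendsto (fun ν => ∫ ω, u ν ω ∂(Pν ν) - ∫ ω, v ω ∂(Pν ν)) atTop (𝓝 0) := by
    refine Metric.tendsto_nhds.2 fun ε hε => ?_
    set η : ℝ := ε / (2 * (1 + 2 * C)) with hη
    have hη0 : 0 < η := by positivity
    set χ : ℕ → Ω → ℝ := fun R ω => max 0 (min 1 ((R : ℝ) + 1 - dist ω o)) with hχ
    have hχc : ∀ R, Continuous (χ R) := fun R => by simp only [hχ]; fun_prop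
    have hχ0 : ∀ R ω, 0 ≤ χ R ω := fun R ω => le_max_left _ _
    have hχ1 : ∀ R ω, χ R ω ≤ 1 := fun R ω => max_le zero_le_one (min_le_left _ _)
    have hχb : ∀ R ω, |χ R ω| ≤ 1 := fun R ω => by rw [abs_of_nonneg (hχ0 R ω)]; exact hχ1 R ω
    have hlimχ : Tendsto (fun R => ∫ ω, χ R ω ∂P) atTop (𝓝 (∫ _, (1 : ℝ) ∂P)) := by
      refine tendsto_integral_of_dominated_convergence (fun _ => (1 : ℝ))
        (fun R => (hχc R).aestronglyMeasurable) (integrable_const _)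
        (fun R => Eventually.of_forall (hχb R)) (Eventually.of_forall fun ω => ?_)
      refine tendsto_const_nhds.congr' ?_
      filter_upwards [eventually_ge_atTop ⌈dist ω o⌉₊] with R hR
      have : dist ω o ≤ R := (Nat.le_ceil _).trans (by exact_mod_cast hR)
      simp only [hχ]
      rw [min_eq_left (by linarith), max_eq_right zero_le_one]
    have h1 : (1 : ℝ) - η < ∫ _, (1 : ℝ) ∂P := by simp [hη0]
    obtain ⟨R, hR⟩ := (hlimχ.eventually (lt_mem_nhds h1)).exists
    have hRν := (hw (χ R) (hχc R) ⟨1, hχb R⟩).eventually (lt_mem_nhds hR)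
    have hunif := eventually_forall_mem_of_isCompact (l := (atTop : Filter ℕ))
      (p := fun ν w => |u ν w - v w| < η) (isCompact_closedBall o ((R : ℝ) + 1)) (fun y _ => by
        have hd : Tendsto (fun q : ℕ × Ω => u q.1 q.2 - v q.2) (atTop ×ˢ 𝓝 y)
            (𝓝 (v y - v y)) := (h y).sub ((hvc.tendsto y).comp tendsto_snd)
        rw [sub_self] at hd
        have := Metric.tendsto_nhds.1 hd η hη0
        simp only [Real.dist_eq, sub_zero] at this
        exact this.filter_mono (Filter.prod_mono le_rfl nhdsWithin_le_nhds))
    filter_upwards [hRν, hunif] with ν hν1 hν2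
    have hχi : Integrable (χ R) (Pν ν) :=
      Integrable.of_bound (hχc R).aestronglyMeasurable 1 (Eventually.of_forall (hχb R))
    have hci : Integrable (fun ω => 2 * C * (1 - χ R ω)) (Pν ν) :=
      ((integrable_const (1 : ℝ)).sub hχi).const_mul _
    rw [Real.dist_eq, sub_zero, ← integral_sub (hui ν) (hvi ν)]
    calc |∫ ω, (u ν ω - v ω) ∂(Pν ν)| ≤ ∫ ω, |u ν ω - v ω| ∂(Pν ν) := abs_integral_le_integral_abs
      _ ≤ ∫ ω, (η + 2 * C * (1 - χ R ω)) ∂(Pν ν) := by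
        refine integral_mono ((hui ν).sub (hvi ν)).abs ((integrable_const _).add hci) fun ω => ?_
        show |u ν ω - v ω| ≤ η + 2 * C * (1 - χ R ω)
        by_cases hω : ω ∈ Metric.closedBall o ((R : ℝ) + 1)
        · have := hν2 ω hω
          have h2 : 0 ≤ 2 * C * (1 - χ R ω) :=
            mul_nonneg (by positivity) (by linarith [hχ1 R ω])
          linarith
        · have hlt : (R : ℝ) + 1 < dist ω o := by simpa using hω
          have hz : χ R ω = 0 := max_eq_left ((min_le_right _ _).trans (by linarith))
          rw [hz]
          have := abs_sub (u ν ω) (v ω)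
          linarith [hu ν ω, hv ω]
      _ = η + 2 * C * (1 - ∫ ω, χ R ω ∂(Pν ν)) := by
        rw [integral_add (integrable_const _) hci, integral_const_mul,
          integral_sub (integrable_const _) hχi]
        simp
      _ ≤ η + 2 * C * η := by
        gcongr; linarith
      _ < ε := by
        have : η + 2 * C * η = ε / 2 := by rw [hη]; field_simp
        linarith
  have := hdiff.add (hw v hvc ⟨C, hv⟩)
  simpa using this

/-- The value of `r` clamped to `[-α, α]`. -/
def clamp (α r : ℝ) : ℝ := max (-α) (min α r)

lemma continuous_clamp (α : ℝ) : Continuous (clamp α) := by unfold clamp; fun_prop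

lemma abs_clamp_le {α : ℝ} (hα : 0 ≤ α) (r : ℝ) : |clamp α r| ≤ α :=
  abs_le.2 ⟨le_max_left _ _, max_le (by linarith) (min_le_left _ _)⟩

lemma clamp_add_le {α : ℝ} (hα : 0 ≤ α) (r : ℝ) :
    clamp α r + (if r ≤ -α then r else 0) ≤ r := by
  unfold clamp
  split_ifs with h
  · rw [min_eq_right (by linarith), max_eq_left h]; linarith
  · rw [max_eq_right (le_min (by linarith) (by linarith))]
    linarith [min_le_right α r]

lemma le_clamp_add {α : ℝ} (hα : 0 ≤ α) (r : ℝ) :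
    r ≤ clamp α r + (if α ≤ r then r else 0) := by
  unfold clamp
  split_ifs with h
  · rw [min_eq_left h, max_eq_right (by linarith)]; linarith
  · rw [min_eq_right (by linarith)]
    linarith [le_max_right (-α) r]

lemma abs_clamp_le_abs {α : ℝ} (hα : 0 ≤ α) (r : ℝ) : |clamp α r| ≤ |r| := by
  unfold clamp
  rcases abs_cases r with ⟨h, h'⟩ | ⟨h, h'⟩ <;> rw [h] <;> refine abs_le.2 ⟨?_, ?_⟩
  · exact le_max_of_le_right (le_min (by linarith) (by linarith))
  · exact max_le (by linarith) (min_le_right _ _)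
  · exact le_max_of_le_right (le_min (by linarith) (by linarith))
  · exact max_le (by linarith) ((min_le_right _ _).trans (by linarith))

lemma tendsto_integral_clamp {Ω : Type*} [MeasurableSpace Ω] {P : Measure Ω} {v : Ω → ℝ}
    (hv : Integrable v P) :
    Tendsto (fun α => ∫ ω, clamp α (v ω) ∂P) atTop (𝓝 (∫ ω, v ω ∂P)) := by
  refine tendsto_integral_filter_of_dominated_convergence (fun ω => |v ω|)
    (Eventually.of_forall fun α => (continuous_clamp α).comp_aestronglyMeasurable hv.1) ?_
    hv.abs (Eventually.of_forall fun ω => ?_)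
  · filter_upwards [eventually_ge_atTop 0] with α hα
    exact Eventually.of_forall fun ω => abs_clamp_le_abs hα _
  · refine tendsto_const_nhds.congr' ?_
    filter_upwards [eventually_ge_atTop |v ω|] with α hα
    unfold clamp
    rw [min_eq_right ((le_abs_self _).trans hα), max_eq_right (by linarith [neg_abs_le (v ω)])]

/-- Convergence of integrals along weakly convergent measures for continuously convergent
integrands whose lower and upper tails are asymptotically negligible: clamping to `[-α, α]` changes
the integrals by at most the tails, and the clamped integrals converge. -/
lemma WeakConv.tendsto_eintegral {Ω : Type*} [PseudoMetricSpace Ω] [ProperSpace Ω]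
    [MeasurableSpace Ω] [BorelSpace Ω] {Pν : ℕ → Measure Ω} {P : Measure Ω}
    [IsProbabilityMeasure P] [∀ ν, IsProbabilityMeasure (Pν ν)] (hw : WeakConv Pν P)
    {g : ℕ → Ω → EReal} {v : Ω → ℝ}
    (hg : ∀ ν, EIntegrable (Pν ν) (g ν)) (hv : EIntegrable P (fun ω => (v ω : EReal)))
    (h : ∀ ω, Tendsto (fun q : ℕ × Ω => g q.1 q.2) (atTop ×ˢ 𝓝 ω) (𝓝 (v ω : EReal)))
    (hlow : ∀ ε : ℝ, 0 < ε → ∃ α₀ : ℝ, ∀ α ≤ α₀, ∀ᶠ ν in atTop,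
      ((-ε : ℝ) : EReal) < eintegral (Pν ν) (truncBelow (g ν) α))
    (hup : ∀ ε : ℝ, 0 < ε → ∃ α₀ : ℝ, ∀ α, α₀ ≤ α → ∀ᶠ ν in atTop,
      eintegral (Pν ν) (truncAbove (g ν) α) < (ε : EReal)) :
    Tendsto (fun ν => eintegral (Pν ν) (g ν)) atTop
      (𝓝 (eintegral P (fun ω => (v ω : EReal)))) := by
  have hvi : Integrable v P := by simpa using hv.real.2.1
  have hveq : eintegral P (fun ω => (v ω : EReal)) = ((∫ ω, v ω ∂P : ℝ) : EReal) := by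
    simpa using hv.real.2.2
  rw [hveq]
  simp_rw [fun ν => (hg ν).real.2.2]
  refine (continuous_coe_real_ereal.tendsto _).comp ?_
  set u : ℕ → Ω → ℝ := fun ν ω => (g ν ω).toReal with hu
  have hcont : ∀ ω, Tendsto (fun q : ℕ × Ω => u q.1 q.2) (atTop ×ˢ 𝓝 ω) (𝓝 (v ω)) := fun ω =>
    (EReal.tendsto_toReal (EReal.coe_ne_top _) (EReal.coe_ne_bot _)).comp (h ω)
  refine Metric.tendsto_nhds.2 fun ε hε => ?_
  obtain ⟨α₁, h₁⟩ := hlow (ε / 3) (by positivity)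
  obtain ⟨α₂, h₂⟩ := hup (ε / 3) (by positivity)
  obtain ⟨α, hα, hα0, hα1, hα2⟩ :=
    (((Metric.tendsto_nhds.1 (tendsto_integral_clamp hvi) (ε / 3) (by positivity)).and
      ((eventually_ge_atTop 0).and ((eventually_ge_atTop (-α₁)).and
        (eventually_ge_atTop α₂))))).exists
  have hclamp := hw.tendsto_integral_of_bounded (u := fun ν ω => clamp α (u ν ω))
    (v := fun ω => clamp α (v ω)) (C := α)
    (fun ν => (continuous_clamp α).comp_aestronglyMeasurable (hg ν).real.2.1.1)
    (fun ν ω => abs_clamp_le hα0 _) (fun ω => abs_clamp_le hα0 _)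
    (fun ω => ((continuous_clamp α).tendsto _).comp (hcont ω))
  filter_upwards [Metric.tendsto_nhds.1 hclamp (ε / 3) (by positivity),
    h₁ (-α) (by linarith), h₂ α hα2] with ν hν1 hν2 hν3
  obtain ⟨hi1, he1⟩ := (hg ν).eintegral_truncBelow (-α)
  obtain ⟨hi2, he2⟩ := (hg ν).eintegral_truncAbove α
  rw [he1, EReal.coe_lt_coe_iff] at hν2
  rw [he2, EReal.coe_lt_coe_iff] at hν3
  have hci : Integrable (fun ω => clamp α (u ν ω)) (Pν ν) :=
    Integrable.of_bound ((continuous_clamp α).comp_aestronglyMeasurable (hg ν).real.2.1.1) α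
      (Eventually.of_forall fun ω => abs_clamp_le hα0 _)
  have hL : ∫ ω, clamp α (u ν ω) ∂(Pν ν) + ∫ ω, (if u ν ω ≤ -α then u ν ω else 0) ∂(Pν ν) ≤
      ∫ ω, u ν ω ∂(Pν ν) := by
    rw [← integral_add hci hi1]
    exact integral_mono (hci.add hi1) (hg ν).real.2.1 fun ω => clamp_add_le hα0 _
  have hU : ∫ ω, u ν ω ∂(Pν ν) ≤
      ∫ ω, clamp α (u ν ω) ∂(Pν ν) + ∫ ω, (if α ≤ u ν ω then u ν ω else 0) ∂(Pν ν) := by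
    rw [← integral_add hci hi2]
    exact integral_mono (hg ν).real.2.1 (hci.add hi2) fun ω => le_clamp_add hα0 _
  rw [Real.dist_eq, abs_lt] at hν1 hα ⊢
  constructor <;> linarith [hν1.1, hν1.2, hα.1, hα.2]

/-! ### The dynamic programming operators -/

lemma eventually_lt_of_liminfAlphaBot {E : Type*} [PseudoMetricSpace E] {X : Set E} {xb : E}
    (hxb : xb ∈ X) {G : ℝ → ℕ → E → EReal}
    (h : liminfAlphaBot (fun α => liminfNuX X xb (G α)) = 0) {ε : ℝ} (hε : 0 < ε) :
    ∃ α₀ : ℝ, ∀ α ≤ α₀, ∀ᶠ ν in atTop, ((-ε : ℝ) : EReal) < G α ν xb := by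
  have h0 : ((-ε : ℝ) : EReal) < liminfAlphaBot (fun α => liminfNuX X xb (G α)) := by
    rw [h]; exact_mod_cast neg_lt_zero.2 hε
  obtain ⟨α₀, hα₀⟩ := lt_iSup_iff.1 h0
  refine ⟨α₀, fun α hα => ?_⟩
  have h1 : ((-ε : ℝ) : EReal) < liminfNuX X xb (G α) := hα₀.trans_le (iInf₂_le α hα)
  simp only [liminfNuX, lt_iSup_iff] at h1
  obtain ⟨δ, hδ, N, hN⟩ := h1
  filter_upwards [eventually_ge_atTop N] with ν hν
  exact hN.trans_le (iInf₂_le_of_le ν hν (iInf₂_le_of_le xb hxb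
    (iInf_le _ (by rw [dist_self]; exact hδ.le))))

lemma eventually_lt_of_limsupAlphaTop {G : ℝ → ℕ → EReal}
    (h : limsupAlphaTop (fun α => limsupNu (G α)) = 0) {ε : ℝ} (hε : 0 < ε) :
    ∃ α₀ : ℝ, ∀ α, α₀ ≤ α → ∀ᶠ ν in atTop, G α ν < (ε : EReal) := by
  have h0 : limsupAlphaTop (fun α => limsupNu (G α)) < (ε : EReal) := by
    rw [h]; exact_mod_cast hε
  obtain ⟨α₀, hα₀⟩ := iInf_lt_iff.1 h0
  refine ⟨α₀, fun α hα => ?_⟩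
  have h1 : limsupNu (G α) < (ε : EReal) :=
    (le_iSup₂ (f := fun α (_ : α₀ ≤ α) => limsupNu (G α)) α hα).trans_lt hα₀
  obtain ⟨N, hN⟩ := iInf_lt_iff.1 h1
  filter_upwards [eventually_ge_atTop N] with ν hν
  exact (le_iSup₂ (f := fun ν (_ : N ≤ ν) => G α ν) ν hν).trans_lt hN

/-- `bop` only sees the values of `f` on the feasible set. -/
lemma bop_congr {E Ξ' : Type*} {X : Set E} {Y : E → Ξ' → Set E} {β : ℝ} {φ : E → E → Ξ' → ℝ}
    {f g : E → EReal} {x : E} (hY : ∀ ξ, Y x ξ ⊆ X) (h : ∀ y ∈ X, f y = g y) :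
    bop Y β φ f x = bop Y β φ g x := by
  funext ξ
  exact iInf_congr fun y => iInf_congr fun hy => by rw [h y (hY ξ hy)]

/-- Value functions obtained by backward recursion agree on `X` with members of the invariant
class `𝒱`, so the integrands of the recursion are integrable. -/
lemma eIntegrable_of_recursion {E Ξ' : Type*} [MeasurableSpace Ξ'] {X : Set E}
    {Y : E → Ξ' → Set E} {β : ℝ} {φ : E → E → Ξ' → ℝ} {P : Measure Ξ'} {𝒱 : Set (E → EReal)}
    (hY : ∀ x ∈ X, ∀ ξ, Y x ξ ⊆ X) (h0 : (fun _ => (0 : EReal)) ∈ 𝒱)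
    (hB : ∀ V ∈ 𝒱, (∀ x ∈ X, EIntegrable P (bop Y β φ V x)) ∧
        (fun x => eintegral P (bop Y β φ V x)) ∈ 𝒱)
    {T : ℕ} {V : ℕ → E → EReal} (hVT : ∀ x, V (T + 1) x = 0)
    (hVrec : ∀ t, 1 ≤ t → t ≤ T → ∀ x ∈ X, V t x = eintegral P (bop Y β φ (V (t + 1)) x))
    {t : ℕ} (ht1 : 1 ≤ t) (htT : t ≤ T) {x : E} (hx : x ∈ X) :
    EIntegrable P (bop Y β φ (V (t + 1)) x) := by
  have key : ∀ k t, 1 ≤ t → t + k = T + 1 → ∃ W ∈ 𝒱, ∀ x ∈ X, V t x = W x := by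
    intro k
    induction k with
    | zero =>
      intro t _ htk
      obtain rfl : t = T + 1 := by omega
      exact ⟨_, h0, fun x _ => hVT x⟩
    | succ k ih =>
      intro t h1 htk
      obtain ⟨W, hW, hWV⟩ := ih (t + 1) (by omega) (by omega)
      refine ⟨_, (hB W hW).2, fun x hx => ?_⟩
      rw [hVrec t h1 (by omega) x hx, bop_congr (hY x hx) hWV]
  obtain ⟨W, hW, hWV⟩ := key (T - t) (t + 1) (by omega) (by omega)
  rw [bop_congr (hY x hx) hWV]
  exact (hB W hW).1 x hx

/-- Finite-horizon consistency of stochastic dynamic programming. -/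
theorem finite_horizon_consistency {n m : ℕ}
    (X : Set (EuclideanSpace ℝ (Fin n))) (hX : IsClosed X)
    (Ξ : Set (EuclideanSpace ℝ (Fin m))) (hΞ : IsClosed Ξ)
    (Y : EuclideanSpace ℝ (Fin n) → Ξ → Set (EuclideanSpace ℝ (Fin n)))
    (hY : ∀ x ∈ X, ∀ ξ : Ξ, (Y x ξ).Nonempty ∧ IsCompact (Y x ξ) ∧ Y x ξ ⊆ X)
    (β : ℝ) (hβ : β ∈ Set.Ioo (0 : ℝ) 1)
    (φ : EuclideanSpace ℝ (Fin n) → EuclideanSpace ℝ (Fin n) → Ξ → ℝ)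
    (φν : ℕ → EuclideanSpace ℝ (Fin n) → EuclideanSpace ℝ (Fin n) → Ξ → ℝ)
    (P : Measure Ξ) (Pν : ℕ → Measure Ξ)
    [IsProbabilityMeasure P] [∀ ν, IsProbabilityMeasure (Pν ν)]
    -- Assumption 1
    (hA1 : ∃ 𝒱 : Set (EuclideanSpace ℝ (Fin n) → EReal),
      (fun _ => (0 : EReal)) ∈ 𝒱 ∧
      (∀ V ∈ 𝒱, LowerSemicontinuousOn V X ∧ ∃ x ∈ X, V x ≠ ⊤) ∧
      (∀ V ∈ 𝒱, (∀ x ∈ X, EIntegrable P (bop Y β φ V x)) ∧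
        (fun x => eintegral P (bop Y β φ V x)) ∈ 𝒱) ∧
      (∀ ν, ∀ V ∈ 𝒱, (∀ x ∈ X, EIntegrable (Pν ν) (bop Y β (φν ν) V x)) ∧
        (fun x => eintegral (Pν ν) (bop Y β (φν ν) V x)) ∈ 𝒱))
    -- convergence of the data
    (hweak : WeakConv Pν P)
    (hφe : EpiConvergesOn (X ×ˢ X ×ˢ (univ : Set Ξ))
      (fun ν p => ((φν ν p.1 p.2.1 p.2.2 : ℝ) : EReal))
      (fun p => ((φ p.1 p.2.1 p.2.2 : ℝ) : EReal)))
    (hφp : ∀ x ∈ X, ∀ y ∈ X, ∀ ξ : Ξ,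
      Tendsto (fun ν => φν ν x y ξ) atTop (𝓝 (φ x y ξ)))
    -- the horizon and the solution functions of the true and approximating equations
    (T : ℕ) (hT : 1 ≤ T)
    (V : ℕ → EuclideanSpace ℝ (Fin n) → EReal)
    (Vν : ℕ → ℕ → EuclideanSpace ℝ (Fin n) → EReal)
    (hVT : ∀ x, V (T + 1) x = 0)
    (hVνT : ∀ ν x, Vν ν (T + 1) x = 0)
    (hVrec : ∀ t, 1 ≤ t → t ≤ T → ∀ x ∈ X,
      V t x = eintegral P (bop Y β φ (V (t + 1)) x))
    (hVνrec : ∀ ν, ∀ t, 1 ≤ t → t ≤ T → ∀ x ∈ X,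
      Vν ν t x = eintegral (Pν ν) (bop Y β (φν ν) (Vν ν (t + 1)) x))
    -- all the solution functions are real valued on 𝒳
    (hreal : ∀ t, 1 ≤ t → t ≤ T + 1 → ∀ x ∈ X,
      (V t x ≠ ⊤ ∧ V t x ≠ ⊥) ∧ ∀ ν, Vν ν t x ≠ ⊤ ∧ Vν ν t x ≠ ⊥)
    -- equi-lower semicontinuity of the approximating solution functions
    (hequiV : ∀ t, 1 ≤ t → t ≤ T → EquiLscOn X (fun ν => Vν ν (t + 1)))
    -- condition (i): asymptotic inf-integrability, lower semicontinuity and equi-lsc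
    (hi : ∀ t, 1 ≤ t → t ≤ T →
      (∀ xb ∈ X, liminfAlphaBot (fun α => liminfNuX X xb (fun ν x =>
        eintegral (Pν ν) (truncBelow (bop Y β (φν ν) (Vν ν (t + 1)) x) α))) = 0) ∧
      (∀ ν, LowerSemicontinuousOn
        (fun p : EuclideanSpace ℝ (Fin n) × Ξ => bop Y β (φν ν) (Vν ν (t + 1)) p.1 p.2)
        (X ×ˢ (univ : Set Ξ))) ∧
      EquiLscOn (X ×ˢ (univ : Set Ξ))
        (fun ν p => bop Y β (φν ν) (Vν ν (t + 1)) p.1 p.2))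
    -- condition (ii): asymptotic sup-integrability, upper semicontinuity and equi-usc
    (hii : ∀ t, 1 ≤ t → t ≤ T → ∀ xb ∈ X,
      limsupAlphaTop (fun α => limsupNu (fun ν =>
        eintegral (Pν ν) (truncAbove (bop Y β (φν ν) (Vν ν (t + 1)) xb) α))) = 0 ∧
      (∀ ν, UpperSemicontinuous (fun ξ : Ξ => bop Y β (φν ν) (Vν ν (t + 1)) xb ξ)) ∧
      EquiUscOn (univ : Set Ξ) (fun ν ξ => bop Y β (φν ν) (Vν ν (t + 1)) xb ξ)) :
    ∀ t, 1 ≤ t → t ≤ T →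
      EpiConvergesOn X (fun ν => Vν ν (t + 1)) (V (t + 1)) ∧
      ∀ x ∈ X, ∀ ξ : Ξ,
        OuterLimit (fun ν => ArgminOn (Y x ξ)
            (fun y => ((φν ν x y ξ : ℝ) : EReal) + (β : EReal) * Vν ν (t + 1) y)) ⊆
          ArgminOn (Y x ξ)
            (fun y => ((φ x y ξ : ℝ) : EReal) + (β : EReal) * V (t + 1) y) ∧
        (ArgminOn (Y x ξ)
          (fun y => ((φ x y ξ : ℝ) : EReal) + (β : EReal) * V (t + 1) y)).Nonempty := by
  obtain ⟨𝒱, h0, -, hB, hBν⟩ := hA1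
  have : ProperSpace Ξ := ProperSpace.of_isClosed hΞ
  have hYX : ∀ x ∈ X, ∀ ξ : Ξ, Y x ξ ⊆ X := fun x hx ξ => (hY x hx ξ).2.2
  have hφL := EpiConvergesOn.lowerLimitOn
    (E := EuclideanSpace ℝ (Fin n) × EuclideanSpace ℝ (Fin n) × Ξ)
    (Z := X ×ˢ X ×ˢ (univ : Set Ξ))
    (F := fun ν p => φν ν p.1 p.2.1 p.2.2) (f := fun p => φ p.1 p.2.1 p.2.2) hφe
  -- Real-valued forms of the stage objectives.
  have hcoe : ∀ t, 1 ≤ t → t ≤ T → ∀ y ∈ X, ∀ r : ℝ,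
      ((r : EReal) + (β : EReal) * V (t + 1) y =
        ((r + β * (V (t + 1) y).toReal : ℝ) : EReal)) ∧
      ∀ ν, (r : EReal) + (β : EReal) * Vν ν (t + 1) y =
        ((r + β * (Vν ν (t + 1) y).toReal : ℝ) : EReal) := by
    intro t h1 hT' y hy r
    obtain ⟨⟨ha, hb⟩, hc⟩ := hreal (t + 1) (by omega) (by omega) y hy
    refine ⟨?_, fun ν => ?_⟩
    · rw [EReal.coe_add, EReal.coe_mul, EReal.coe_toReal ha hb]
    · rw [EReal.coe_add, EReal.coe_mul, EReal.coe_toReal (hc ν).1 (hc ν).2]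
  -- Pointwise convergence upgrades to the joint lower limit by equi-lower semicontinuity.
  have hVL : ∀ t, 1 ≤ t → t ≤ T →
      (∀ x ∈ X, Tendsto (fun ν => Vν ν (t + 1) x) atTop (𝓝 (V (t + 1) x))) →
      ∀ z ∈ X, ∀ a < (V (t + 1) z).toReal,
        ∀ᶠ q in (atTop : Filter ℕ) ×ˢ 𝓝[X] z, (a : EReal) < Vν q.1 (t + 1) q.2 := by
    intro t h1 hT' hp z hz a ha
    have hzr := (hreal (t + 1) (by omega) (by omega) z hz).1
    refine (hequiV t h1 hT').eventually_lt hz (c := (V (t + 1) z).toReal) ?_ ha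
    rw [EReal.coe_toReal hzr.1 hzr.2]
    exact hp z hz
  have hH : ∀ t, 1 ≤ t → t ≤ T →
      (∀ x ∈ X, Tendsto (fun ν => Vν ν (t + 1) x) atTop (𝓝 (V (t + 1) x))) →
      ∀ x ∈ X, ∀ ξ : Ξ,
        (∀ y ∈ Y x ξ, Tendsto (fun ν => φν ν x y ξ + β * (Vν ν (t + 1) y).toReal) atTop
          (𝓝 (φ x y ξ + β * (V (t + 1) y).toReal))) ∧
        LowerLimitOn (Y x ξ) (fun ν y => φν ν x y ξ + β * (Vν ν (t + 1) y).toReal)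
          (fun y => φ x y ξ + β * (V (t + 1) y).toReal) := by
    intro t h1 hT' hp x hx ξ
    refine ⟨fun y hy => ?_, fun y hy a ha => ?_⟩
    · have hyX := hYX x hx ξ hy
      have hyr := (hreal (t + 1) (by omega) (by omega) y hyX).1
      exact (hφp x hx y hyX ξ).add
        (((EReal.tendsto_toReal hyr.1 hyr.2).comp (hp y hyX)).const_mul β)
    · have hyX := hYX x hx ξ hy
      set η : ℝ := (φ x y ξ + β * (V (t + 1) y).toReal - a) / 2 with hη
      have hη0 : 0 < η := by simp only [hη]; linarith
      have hmap : Tendsto (fun w => (x, w, ξ)) (𝓝[Y x ξ] y)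
          (𝓝[X ×ˢ X ×ˢ (univ : Set Ξ)] (x, y, ξ)) := by
        refine tendsto_nhdsWithin_iff.2 ⟨?_, ?_⟩
        · exact ((by fun_prop : Continuous fun w => (x, w, ξ)).tendsto y).mono_left
            nhdsWithin_le_nhds
        · filter_upwards [eventually_mem_nhdsWithin] with w hw
          exact ⟨hx, hYX x hx ξ hw, mem_univ _⟩
      have e1 := ((tendsto_id (α := ℕ) (x := atTop)).prodMap hmap).eventually
        (hφL (x, y, ξ) ⟨hx, hyX, mem_univ _⟩ (φ x y ξ - η) (by simp only; linarith))
      have e2 := (hVL t h1 hT' hp y hyX ((V (t + 1) y).toReal - η / β)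
        (by linarith [div_pos hη0 hβ.1])).filter_mono
          (Filter.prod_mono le_rfl (nhdsWithin_mono y (hYX x hx ξ)))
      have e3 : ∀ᶠ q in (atTop : Filter ℕ) ×ˢ 𝓝[Y x ξ] y, q.2 ∈ Y x ξ :=
        tendsto_snd.eventually (eventually_mem_nhdsWithin (a := y) (s := Y x ξ))
      filter_upwards [e1, e2, e3] with q hq1 hq2 hq3
      have hqr := (hreal (t + 1) (by omega) (by omega) q.2 (hYX x hx ξ hq3)).2 q.1
      rw [← EReal.coe_toReal hqr.1 hqr.2, EReal.coe_lt_coe_iff] at hq2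
      have h3 : β * ((V (t + 1) y).toReal - η / β) < β * (Vν q.1 (t + 1) q.2).toReal :=
        mul_lt_mul_of_pos_left hq2 hβ.1
      rw [mul_sub, mul_div_cancel₀ _ hβ.1.ne'] at h3
      simp only [Prod.map_fst, Prod.map_snd, id] at hq1
      linarith
  -- One backward step: pointwise convergence of the value functions is inherited.
  have hstep : ∀ t, 1 ≤ t → t ≤ T →
      (∀ x ∈ X, Tendsto (fun ν => Vν ν (t + 1) x) atTop (𝓝 (V (t + 1) x))) →
      ∀ x ∈ X, Tendsto (fun ν => Vν ν t x) atTop (𝓝 (V t x)) := by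
    intro t h1 hT' hp x hx
    have hb : ∀ ξ : Ξ, ∃ r : ℝ, bop Y β φ (V (t + 1)) x ξ = (r : EReal) ∧
        Tendsto (fun ν => bop Y β (φν ν) (Vν ν (t + 1)) x ξ) atTop (𝓝 (r : EReal)) := by
      intro ξ
      obtain ⟨hne, hcomp, hsub⟩ := hY x hx ξ
      obtain ⟨hpt, hLL⟩ := hH t h1 hT' hp x hx ξ
      obtain ⟨y, -, -, heq, hlim⟩ := hLL.tendsto_iInf hcomp hne hpt
      refine ⟨_, ?_, hlim.congr fun ν => ?_⟩
      · rw [← heq]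
        exact iInf_congr fun y => iInf_congr fun hy => (hcoe t h1 hT' y (hsub hy) _).1
      · exact (iInf_congr fun y => iInf_congr fun hy => (hcoe t h1 hT' y (hsub hy) _).2 ν).symm
    choose v hv hvlim using hb
    have hvfun : bop Y β φ (V (t + 1)) x = fun ξ => (v ξ : EReal) := funext hv
    have hcont : ∀ ξ : Ξ, Tendsto
        (fun q : ℕ × Ξ => bop Y β (φν q.1) (Vν q.1 (t + 1)) x q.2)
        (atTop ×ˢ 𝓝 ξ) (𝓝 (v ξ : EReal)) := by
      intro ξ
      refine tendsto_order.2 ⟨fun a ha => ?_, fun a ha => ?_⟩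
      · obtain ⟨r, har, hr⟩ := EReal.lt_iff_exists_real_btwn.1 ha
        have hmap : Tendsto (fun w : Ξ => (x, w)) (𝓝 ξ) (𝓝[X ×ˢ (univ : Set Ξ)] (x, ξ)) :=
          tendsto_nhdsWithin_iff.2 ⟨(by fun_prop : Continuous fun w : Ξ => (x, w)).tendsto ξ,
            Eventually.of_forall fun w => ⟨hx, mem_univ _⟩⟩
        have := ((tendsto_id (α := ℕ) (x := atTop)).prodMap hmap).eventually
          ((hi t h1 hT').2.2.eventually_lt (z := (x, ξ)) ⟨hx, mem_univ _⟩ (hvlim ξ)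
            (EReal.coe_lt_coe_iff.1 hr))
        filter_upwards [this] with q hq using har.trans hq
      · obtain ⟨r, hr, hra⟩ := EReal.lt_iff_exists_real_btwn.1 ha
        have hneg : Tendsto (fun ν => -bop Y β (φν ν) (Vν ν (t + 1)) x ξ) atTop
            (𝓝 ((-v ξ : ℝ) : EReal)) := by
          rw [EReal.coe_neg]
          exact (continuous_neg.tendsto _).comp (hvlim ξ)
        have hlt := EquiLscOn.eventually_lt (hii t h1 hT' x hx).2.2 (mem_univ ξ) hneg
          (a := -r) (neg_lt_neg (EReal.coe_lt_coe_iff.1 hr))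
        rw [nhdsWithin_univ] at hlt
        filter_upwards [hlt] with q hq
        rw [EReal.coe_neg, EReal.neg_lt_neg_iff] at hq
        exact hq.trans hra
    have hmain := hweak.tendsto_eintegral
      (g := fun ν => bop Y β (φν ν) (Vν ν (t + 1)) x) (v := v)
      (fun ν => eIntegrable_of_recursion (V := Vν ν) hYX h0 (hBν ν) (hVνT ν) (hVνrec ν) h1 hT' hx)
      (hvfun ▸ eIntegrable_of_recursion hYX h0 hB hVT hVrec h1 hT' hx) hcont
      (fun ε hε => eventually_lt_of_liminfAlphaBot hx
        (G := fun α ν x => eintegral (Pν ν) (truncBelow (bop Y β (φν ν) (Vν ν (t + 1)) x) α))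
        ((hi t h1 hT').1 x hx) hε)
      (fun ε hε => eventually_lt_of_limsupAlphaTop (hii t h1 hT' x hx).1 hε)
    rw [hVrec t h1 hT' x hx, hvfun]
    exact hmain.congr fun ν => (hVνrec ν t h1 hT' x hx).symm
  have hpoint : ∀ k t, 1 ≤ t → t + k = T + 1 →
      ∀ x ∈ X, Tendsto (fun ν => Vν ν t x) atTop (𝓝 (V t x)) := by
    intro k
    induction k with
    | zero =>
      intro t _ htk x _
      obtain rfl : t = T + 1 := by omega
      simp only [hVT, hVνT]
      exact tendsto_const_nhds
    | succ k ih =>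
      intro t h1 htk
      exact hstep t h1 (by omega) (ih (t + 1) (by omega) (by omega))
  intro t h1 hT'
  have hp := hpoint (T - t) (t + 1) (by omega) (by omega)
  refine ⟨fun z hz => ⟨fun zs hzs hzl => ?_, fun _ => z, fun _ => hz, tendsto_const_nhds,
    (hp z hz).limsup_eq.le⟩, fun x hx ξ => ?_⟩
  · have hzr := (hreal (t + 1) (by omega) (by omega) z hz).1
    refine le_of_forall_lt fun a ha => ?_
    rw [← EReal.coe_toReal hzr.1 hzr.2] at ha
    obtain ⟨r, har, hr⟩ := EReal.lt_iff_exists_real_btwn.1 ha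
    have hpair : Tendsto (fun ν => (ν, zs ν)) atTop ((atTop : Filter ℕ) ×ˢ 𝓝[X] z) :=
      tendsto_id.prodMk (tendsto_nhdsWithin_iff.2 ⟨hzl, Eventually.of_forall hzs⟩)
    refine har.trans_le (le_liminf_of_le (by isBoundedDefault) ?_)
    filter_upwards [hpair.eventually (hVL t h1 hT' hp z hz r (EReal.coe_lt_coe_iff.1 hr))]
      with ν hν using hν.le
  · obtain ⟨hne, hcomp, hsub⟩ := hY x hx ξ
    obtain ⟨hpt, hLL⟩ := hH t h1 hT' hp x hx ξ
    have hargmin : ∀ f g : EuclideanSpace ℝ (Fin n) → EReal, (∀ y ∈ Y x ξ, f y = g y) →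
        ArgminOn (Y x ξ) f = ArgminOn (Y x ξ) g := by
      intro f g hfg
      ext y
      refine and_congr_right fun hy => forall₂_congr fun z hz => ?_
      rw [hfg y hy, hfg z hz]
    simp_rw [fun ν => hargmin _ _ fun y hy => (hcoe t h1 hT' y (hsub hy) (φν ν x y ξ)).2 ν]
    rw [hargmin _ _ fun y hy => (hcoe t h1 hT' y (hsub hy) (φ x y ξ)).1]
    refine ⟨hLL.outerLimit_argmin_subset hcomp hpt, ?_⟩
    obtain ⟨y, hy, hmin, -⟩ := hLL.tendsto_iInf hcomp hne hpt
    exact ⟨y, hy, fun z hz => EReal.coe_le_coe_iff.2 (hmin z hz)⟩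

end
end
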